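/- Fix ν > 0, and let γ₁(λ) = μ₃(λ)/(μ₂(λ))^(3/2) denote the skewness of the CMP(λ,ν) distribution, where μ_k(λ) = E[(X − E X)^k] is the k-th central moment of X ∼ CMP(λ,ν). Then as λ → ∞, γ₁(λ) = (λ^(−1/(2ν))/√ν)·(1 − (5(ν²−1)/(48ν²))·λ^(−2/ν) − (7(ν²−1)/(24ν³))·λ^(−3/ν) + O(λ^(−4/ν))). Precisely: there exist constants C > 0 and Λ > 0 (depending only on ν) such that for all λ ≥ Λ, |√ν·λ^(1/(2ν))·γ₁(λ) − 1 + (5(ν²−1)/(48ν²))·λ^(−2/ν) + (7(ν²−1)/(24ν³))·λ^(−3/ν)| ≤ C·λ^(−4/ν). -/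

import Mathlib

open scoped BigOperators

/-- The Conway-Maxwell-Poisson normalizing constant `Z(λ,ν) = ∑_{i=0}^∞ λ^i/(i!)^ν`. -/
noncomputable def cmpZ (lam nu : ℝ) : ℝ := ∑' i : ℕ, lam ^ i / (i.factorial : ℝ) ^ nu

/-- The mean of the `CMP(λ,ν)` distribution. -/
noncomputable def cmpMean (lam nu : ℝ) : ℝ :=
  (∑' j : ℕ, (j : ℝ) * lam ^ j / (j.factorial : ℝ) ^ nu) / cmpZ lam nu

/-- The `k`-th central moment `μ_k = E[(X − E X)^k]` of the `CMP(λ,ν)` distribution. -/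
noncomputable def cmpCentralMoment (k : ℕ) (lam nu : ℝ) : ℝ :=
  (∑' j : ℕ, ((j : ℝ) - cmpMean lam nu) ^ k * lam ^ j / (j.factorial : ℝ) ^ nu) / cmpZ lam nu

/-- The skewness `γ₁ = μ₃/μ₂^{3/2}` of the `CMP(λ,ν)` distribution. -/
noncomputable def cmpSkewness (lam nu : ℝ) : ℝ :=
  cmpCentralMoment 3 lam nu / cmpCentralMoment 2 lam nu ^ ((3 : ℝ) / 2)

/-!
At `λ = u ^ (-ν)` the law of `u * X`, for `X ∼ CMP(λ, ν)`, concentrates at `1` as `u` tends to `0`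
from the right. The recursion `j ^ ν * w j = λ * w (j - 1)` of the weights is a Stein identity
`E[Y ^ ν * f Y] = E[f (Y + u)]` for `Y = u * X`; expanding `y ^ ν` at `1` and taking powers of
`y - 1` for `f`, it shows inductively that all moments of `Y` about `1` have asymptotic expansions
in powers of `u`.

The derivative in `u` of a moment is again a combination of moments, so the expansions satisfy a
differential recursion. It expresses every moment through the mean, and combined with Stein's
identity for `f = 1` it determines the first coefficients of the mean `M`. Moreover the cumulants of
an exponential family are iterated logarithmic derivatives of the normalizing constant, whence
`ν * μ₂(Y) / u = (1 - u d/du) M` and `ν ^ 2 * μ₃(Y) / u ^ 2 = (1 - u d/du) ^ 2 M`. The expansion of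
the skewness follows from those of these two ratios, which both tend to `1`.
-/

section AsymptoticSeries

open Asymptotics Filter Topology Polynomial

lemma isBigO_eval_of_X_pow_dvd {l : Filter ℝ} (hl : l ≤ 𝓝 0) {r : ℝ[X]} {N : ℕ}
    (h : X ^ N ∣ r) : (fun u => r.eval u) =O[l] fun u => u ^ N := by
  obtain ⟨s, rfl⟩ := h
  have hs : (fun u => s.eval u) =O[l] fun _ => (1 : ℝ) :=
    (s.continuous.tendsto 0).isBigO_one ℝ |>.mono hl
  simpa using (isBigO_refl (fun u : ℝ => u ^ N) l).mul hs

lemma pow_isBigO_pow_of_le {l : Filter ℝ} (hl : l ≤ 𝓝 0) {m n : ℕ} (h : n ≤ m) :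
    (fun u : ℝ => u ^ m) =O[l] fun u => u ^ n := by
  simpa using isBigO_eval_of_X_pow_dvd hl (pow_dvd_pow (X : ℝ[X]) h)

lemma X_pow_dvd_of_isBigO_eval {l : Filter ℝ} [l.NeBot] (hl : l ≤ 𝓝[≠] 0) {r : ℝ[X]} {N : ℕ}
    (h : (fun u => r.eval u) =O[l] fun u => u ^ N) : X ^ N ∣ r := by
  have hl0 : l ≤ 𝓝 0 := hl.trans nhdsWithin_le_nhds
  induction N with
  | zero => simp
  | succ N ih =>
    obtain ⟨s, rfl⟩ := ih (h.trans (pow_isBigO_pow_of_le hl0 N.le_succ))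
    have hs : (fun u => s.eval u) =O[l] fun u => u := by
      refine ((isBigO_refl (fun u : ℝ => (u ^ N)⁻¹) l).mul h).congr' ?_ ?_ <;>
      · filter_upwards [hl self_mem_nhdsWithin] with u hu
        have : u ≠ 0 := hu
        simp [field, pow_succ]
    have hs0 : s.eval 0 = 0 :=
      tendsto_nhds_unique (s.continuous.tendsto 0 |>.mono_left hl0) (hs.trans_tendsto hl0)
    rw [pow_succ]
    exact mul_dvd_mul_left _ (X_dvd_iff.2 (by rwa [coeff_zero_eq_eval_zero]))

section Comparison

variable {l : Filter ℝ} {f : ℝ → ℝ} {P Q : ℝ[X]} {N : ℕ}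

lemma isBigO_sub_eval_of_X_pow_dvd (hl : l ≤ 𝓝 0)
    (hP : (fun u => f u - P.eval u) =O[l] fun u => u ^ N) (h : X ^ N ∣ P - Q) :
    (fun u => f u - Q.eval u) =O[l] fun u => u ^ N :=
  (hP.add (isBigO_eval_of_X_pow_dvd hl h)).congr_left fun u => by rw [eval_sub]; ring

lemma X_pow_dvd_sub_of_isBigO [l.NeBot] (hl : l ≤ 𝓝[≠] 0)
    (hP : (fun u => f u - P.eval u) =O[l] fun u => u ^ N)
    (hQ : (fun u => f u - Q.eval u) =O[l] fun u => u ^ N) : X ^ N ∣ P - Q :=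
  X_pow_dvd_of_isBigO_eval hl <| (hQ.sub hP).congr_left fun u => by rw [eval_sub]; ring

end Comparison

lemma tendsto_const_mul_nhdsGT_zero {c : ℝ} (hc : 0 < c) :
    Tendsto (fun u => c * u) (𝓝[>] 0) (𝓝[>] 0) :=
  tendsto_nhdsWithin_iff.2 ⟨((continuous_const_mul c).tendsto' 0 0 (mul_zero c)).mono_left
    nhdsWithin_le_nhds, eventually_mem_nhdsWithin.mono fun _ hu => mul_pos hc hu⟩

/-- The derivative of an `O(u ^ (N + 1))` need not be `O(u ^ N)`, but by the mean value theorem it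
is so along some filter converging to `0`. -/
lemma exists_le_isBigO_of_hasDerivAt {h h' : ℝ → ℝ} {N : ℕ}
    (hderiv : ∀ u > 0, HasDerivAt h (h' u) u) (hO : h =O[𝓝[>] 0] fun u => u ^ (N + 1)) :
    ∃ l : Filter ℝ, l.NeBot ∧ l ≤ 𝓝[>] 0 ∧ h' =O[l] fun u => u ^ N := by
  have hmvt (u : ℝ) (hu : 0 < u) : ∃ ξ ∈ Set.Ioo u (2 * u), h' ξ = (h (2 * u) - h u) / u := by
    obtain ⟨ξ, hξ, h_eq⟩ := exists_hasDerivAt_eq_slope h h' (by linarith : u < 2 * u)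
      (fun x hx => (hderiv x (hu.trans_le hx.1)).continuousAt.continuousWithinAt)
      fun x hx => hderiv x (hu.trans hx.1)
    exact ⟨ξ, hξ, by rw [h_eq]; ring⟩
  choose! ξ hξ hslope using hmvt
  have hdouble := tendsto_const_mul_nhdsGT_zero (two_pos (α := ℝ))
  have hξ0 : Tendsto ξ (𝓝[>] 0) (𝓝[>] 0) := by
    have hle : ∀ᶠ u in 𝓝[>] 0, u < ξ u ∧ ξ u < 2 * u :=
      eventually_mem_nhdsWithin.mono fun u hu => hξ u hu
    refine tendsto_nhdsWithin_iff.2 ⟨tendsto_of_tendsto_of_tendsto_of_le_of_le'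
      (tendsto_id.mono_left nhdsWithin_le_nhds) (hdouble.mono_right nhdsWithin_le_nhds)
      (hle.mono fun u hu => hu.1.le) (hle.mono fun u hu => hu.2.le), ?_⟩
    filter_upwards [hle, self_mem_nhdsWithin] with u hu hu0
    exact lt_trans hu0 hu.1
  refine ⟨map ξ (𝓝[>] 0), inferInstance, hξ0, isBigO_map.2 ?_⟩
  have hdiff : (fun u => h (2 * u) - h u) =O[𝓝[>] 0] fun u => u ^ (N + 1) := by
    refine IsBigO.sub ((hO.comp_tendsto hdouble).trans ?_) hO
    simpa only [Function.comp_def, mul_pow] using (isBigO_refl _ _).const_mul_left _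
  calc h' ∘ ξ =ᶠ[𝓝[>] 0] fun u => u⁻¹ * (h (2 * u) - h u) := by
        filter_upwards [self_mem_nhdsWithin] with u hu
        rw [Function.comp_apply, hslope u hu, div_eq_inv_mul]
    _ =O[𝓝[>] 0] fun u => u⁻¹ * u ^ (N + 1) := (isBigO_refl _ _).mul hdiff
    _ =ᶠ[𝓝[>] 0] fun u => u ^ N := by
        filter_upwards [self_mem_nhdsWithin] with u (hu : 0 < u)
        rw [pow_succ', inv_mul_cancel_left₀ hu.ne']
    _ =O[𝓝[>] 0] fun u => ξ u ^ N := by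
        refine IsBigO.of_bound 1 ?_
        filter_upwards [self_mem_nhdsWithin] with u (hu : 0 < u)
        rw [one_mul, norm_pow, norm_pow, Real.norm_of_nonneg hu.le,
          Real.norm_of_nonneg (hu.trans (hξ u hu).1).le]
        exact pow_le_pow_left₀ hu.le (hξ u hu).1.le N

/-- `HasAsymptoticSeries f p`: the formal power series `p` (not assumed to converge) is the
asymptotic expansion of `f` to all orders as its argument decreases to `0`. -/
def HasAsymptoticSeries (f : ℝ → ℝ) (p : PowerSeries ℝ) : Prop :=
  ∀ N, (fun u => f u - (p.trunc N).eval u) =O[𝓝[>] 0] fun u => u ^ N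

/-- The functions agreeing with some polynomial up to `O(u ^ N)` as `u` decreases to `0`. -/
def polynomialUpTo (N : ℕ) : Submodule ℝ (ℝ → ℝ) where
  carrier := {f | ∃ P : ℝ[X], (fun u => f u - P.eval u) =O[𝓝[>] 0] fun u => u ^ N}
  zero_mem' := ⟨0, by simpa using isBigO_zero _ _⟩
  add_mem' := fun {f g} ⟨P, hP⟩ ⟨Q, hQ⟩ => ⟨P + Q, (hP.add hQ).congr_left fun u => by
    simp only [Pi.add_apply, eval_add]; ring⟩
  smul_mem' := fun c f ⟨P, hP⟩ => ⟨C c * P, (hP.const_mul_left c).congr_left fun u => by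
    simp only [Pi.smul_apply, smul_eq_mul, eval_mul, eval_C]; ring⟩

namespace polynomialUpTo

variable {f : ℝ → ℝ} {N : ℕ}

lemma mem_of_isBigO (h : f =O[𝓝[>] 0] fun u => u ^ N) : f ∈ polynomialUpTo N :=
  ⟨0, by simpa using h⟩

lemma pow_mul_mem {d : ℕ} (hf : f ∈ polynomialUpTo (N - d)) :
    (fun u => u ^ d * f u) ∈ polynomialUpTo N := by
  obtain ⟨P, hP⟩ := hf
  refine ⟨X ^ d * P, ?_⟩
  refine (((isBigO_refl (fun u : ℝ => u ^ d) _).mul hP).congr (fun u => ?_) fun u => ?_).trans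
    (pow_isBigO_pow_of_le nhdsWithin_le_nhds (show N ≤ d + (N - d) by lia))
  · simp only [eval_mul, eval_pow, eval_X]; ring
  · rw [pow_add]

end polynomialUpTo

namespace HasAsymptoticSeries

variable {f g : ℝ → ℝ} {p q : PowerSeries ℝ} {N : ℕ}

lemma isBigO_sub_eval (hf : HasAsymptoticSeries f p) {P : ℝ[X]}
    (hP : ∀ n < N, p.coeff n = P.coeff n) :
    (fun u => f u - P.eval u) =O[𝓝[>] 0] fun u => u ^ N :=
  isBigO_sub_eval_of_X_pow_dvd nhdsWithin_le_nhds (hf N) <| X_pow_dvd_iff.2 fun n hn => by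
    simp [PowerSeries.coeff_trunc, hn, hP n hn]

lemma isBigO_sub_sum (hf : HasAsymptoticSeries f p) (N : ℕ) :
    (fun u => f u - ∑ n ∈ Finset.range N, p.coeff n * u ^ n) =O[𝓝[>] 0] fun u => u ^ N :=
  (hf N).congr_left fun u => by
    simp only [eval, PowerSeries.eval₂_trunc_eq_sum_range, RingHom.id_apply]

lemma coeff_eq_of_isBigO_sub_eval (hf : HasAsymptoticSeries f p) {P : ℝ[X]}
    (hP : (fun u => f u - P.eval u) =O[𝓝[>] 0] fun u => u ^ N) {n : ℕ} (hn : n < N) :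
    p.coeff n = P.coeff n := by
  have := X_pow_dvd_iff.1 (X_pow_dvd_sub_of_isBigO (nhdsGT_le_nhdsNE 0) (hf N) hP) n hn
  simpa [PowerSeries.coeff_trunc, hn, sub_eq_zero] using this

lemma coeff_eq_zero_of_isBigO (hf : HasAsymptoticSeries f p)
    (h : f =O[𝓝[>] 0] fun u => u ^ N) {n : ℕ} (hn : n < N) : p.coeff n = 0 := by
  simpa using hf.coeff_eq_of_isBigO_sub_eval (P := 0) (by simpa using h) hn

lemma unique (hp : HasAsymptoticSeries f p) (hq : HasAsymptoticSeries f q) : p = q := by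
  ext n
  simpa [PowerSeries.coeff_trunc] using hp.coeff_eq_of_isBigO_sub_eval (hq (n + 1)) n.lt_succ_self

lemma exists_of_forall_mem_polynomialUpTo (h : ∀ N, f ∈ polynomialUpTo N) :
    ∃ p, HasAsymptoticSeries f p := by
  choose P hP using h
  refine ⟨PowerSeries.mk fun n => (P (n + 1)).coeff n, fun N => ?_⟩
  refine isBigO_sub_eval_of_X_pow_dvd nhdsWithin_le_nhds (hP N) (X_pow_dvd_iff.2 fun n hn => ?_)
  have hdvd := X_pow_dvd_sub_of_isBigO (nhdsGT_le_nhdsNE 0)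
    ((hP N).trans (pow_isBigO_pow_of_le nhdsWithin_le_nhds hn)) (hP (n + 1))
  simpa [PowerSeries.coeff_trunc, hn] using X_pow_dvd_iff.1 hdvd n n.lt_succ_self

lemma congr' (hf : HasAsymptoticSeries f p) (h : f =ᶠ[𝓝[>] 0] g) : HasAsymptoticSeries g p :=
  fun N => (hf N).congr' (h.mono fun u hu => by simp only [hu]) .rfl

lemma polynomial (P : ℝ[X]) : HasAsymptoticSeries (fun u => P.eval u) P := fun N => by
  have hdvd : X ^ N ∣ P - (P : PowerSeries ℝ).trunc N := X_pow_dvd_iff.2 fun n hn => by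
    simp [PowerSeries.coeff_trunc, hn]
  simpa using isBigO_eval_of_X_pow_dvd nhdsWithin_le_nhds hdvd

lemma add (hf : HasAsymptoticSeries f p) (hg : HasAsymptoticSeries g q) :
    HasAsymptoticSeries (fun u => f u + g u) (p + q) := fun N =>
  ((hf N).add (hg N)).congr_left fun u => by simp only [map_add, eval_add]; ring

lemma sub (hf : HasAsymptoticSeries f p) (hg : HasAsymptoticSeries g q) :
    HasAsymptoticSeries (fun u => f u - g u) (p - q) := fun N =>
  ((hf N).sub (hg N)).congr_left fun u => by simp only [map_sub, eval_sub]; ring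

lemma mul (hf : HasAsymptoticSeries f p) (hg : HasAsymptoticSeries g q) :
    HasAsymptoticSeries (fun u => f u * g u) (p * q) := fun N => by
  have hbdd (P : ℝ[X]) : (fun u => P.eval u) =O[𝓝[>] 0] fun _ => (1 : ℝ) :=
    (P.continuous.tendsto 0).isBigO_one ℝ |>.mono nhdsWithin_le_nhds
  have hf1 : f =O[𝓝[>] 0] fun _ => (1 : ℝ) := by simpa using hf 0
  have hdvd : X ^ N ∣ p.trunc N * q.trunc N - (p * q).trunc N := X_pow_dvd_iff.2 fun n hn => by
    rw [← PowerSeries.trunc_trunc_mul_trunc, ← Polynomial.coe_mul, coeff_sub,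
      PowerSeries.coeff_trunc, if_pos hn, coeff_coe, sub_self]
  have hfg := (hf1.mul (hg N)).add ((hbdd (q.trunc N)).mul (hf N))
  simp only [one_mul] at hfg
  refine (hfg.add (isBigO_eval_of_X_pow_dvd nhdsWithin_le_nhds hdvd)).congr_left fun u => ?_
  simp only [eval_sub, eval_mul]; ring

lemma const (c : ℝ) : HasAsymptoticSeries (fun _ => c) (PowerSeries.C c) := by
  simpa using polynomial (C c)

lemma id : HasAsymptoticSeries (fun u => u) PowerSeries.X := by
  simpa using polynomial X

lemma sum {ι : Type*} (s : Finset ι) {F : ι → ℝ → ℝ} {P : ι → PowerSeries ℝ}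
    (h : ∀ i ∈ s, HasAsymptoticSeries (F i) (P i)) :
    HasAsymptoticSeries (fun u => ∑ i ∈ s, F i u) (∑ i ∈ s, P i) := fun N => by
  refine (IsBigO.fun_sum fun i hi => h i hi N).congr_left fun u => ?_
  rw [Finset.sum_sub_distrib, map_sum, eval_finsetSum]

lemma of_X_pow_mul {d : ℕ} (hf : HasAsymptoticSeries f (PowerSeries.X ^ d * p)) :
    HasAsymptoticSeries (fun u => f u / u ^ d) p := fun N => by
  have h := hf.isBigO_sub_eval (N := d + N) (P := X ^ d * p.trunc N) fun n hn => by
    rw [PowerSeries.coeff_X_pow_mul', coeff_X_pow_mul', PowerSeries.coeff_trunc]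
    split_ifs <;> first | rfl | lia
  refine (h.mul (isBigO_refl (fun u : ℝ => (u ^ d)⁻¹) _)).congr' ?_ ?_ <;>
    filter_upwards [self_mem_nhdsWithin] with u (hu : 0 < u)
  · simp only [eval_mul, eval_pow, eval_X]
    field_simp
  · rw [pow_add]
    field_simp

lemma eq_X_pow_mul_derivative {f' : ℝ → ℝ} {m : ℕ} (hf : HasAsymptoticSeries f p)
    (hderiv : ∀ u > 0, HasDerivAt f (f' u) u)
    (hq : HasAsymptoticSeries (fun u => u ^ m * f' u) q) :
    q = PowerSeries.X ^ m * PowerSeries.derivative ℝ p := by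
  ext n
  set P := p.trunc (n + 1 + 1)
  obtain ⟨l, hlne, hl, hO⟩ := exists_le_isBigO_of_hasDerivAt
    (fun u hu => (hderiv u hu).sub (P.hasDerivAt u)) (hf (n + 1 + 1))
  have hqP : (fun u => u ^ m * f' u - (X ^ m * derivative P).eval u) =O[l]
      fun u => u ^ (n + 1) := by
    refine (((continuous_pow m).tendsto 0).isBigO_one ℝ |>.mono
      (hl.trans nhdsWithin_le_nhds) |>.mul hO).congr (fun u => ?_) fun u => ?_
    · simp only [eval_mul, eval_pow, eval_X]; ring
    · rw [one_mul]
  have hdvd := X_pow_dvd_sub_of_isBigO (hl.trans (nhdsGT_le_nhdsNE 0)) ((hq (n + 1)).mono hl) hqP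
  have hn := X_pow_dvd_iff.1 hdvd n n.lt_succ_self
  rw [coeff_sub, PowerSeries.coeff_trunc, if_pos n.lt_succ_self, sub_eq_zero] at hn
  rw [hn, coeff_X_pow_mul', PowerSeries.coeff_X_pow_mul']
  split_ifs with hm
  · rw [coeff_derivative, PowerSeries.coeff_derivative, PowerSeries.coeff_trunc, if_pos (by lia)]
  · rfl

end HasAsymptoticSeries

end AsymptoticSeries

section PolynomialGrowth

open Asymptotics Filter Topology

/-- `HasPolynomialGrowth f`: on `[0, ∞)` the function `f` is bounded by a multiple of a power of
`1 + y`. -/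
@[fun_prop]
def HasPolynomialGrowth (f : ℝ → ℝ) : Prop :=
  ∃ p : ℕ, f =O[𝓟 (Set.Ici 0)] fun y => (1 + y) ^ p

namespace HasPolynomialGrowth

variable {f g : ℝ → ℝ}

lemma exists_pos (hf : HasPolynomialGrowth f) :
    ∃ C > 0, ∃ p : ℕ, ∀ y, 0 ≤ y → |f y| ≤ C * (1 + y) ^ p := by
  obtain ⟨p, hp⟩ := hf
  obtain ⟨C, hC, h⟩ := hp.exists_pos
  refine ⟨C, hC, p, fun y hy => (isBigOWith_principal.1 h y hy).trans_eq ?_⟩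
  rw [Real.norm_of_nonneg (by positivity)]

@[fun_prop]
lemma const (c : ℝ) : HasPolynomialGrowth fun _ => c :=
  ⟨0, by simpa using isBigO_const_const c (one_ne_zero (α := ℝ)) _⟩

@[fun_prop]
lemma id : HasPolynomialGrowth fun y => y :=
  ⟨1, isBigO_principal.2 ⟨1, fun y (hy : 0 ≤ y) => by
    rw [Real.norm_of_nonneg hy, Real.norm_of_nonneg (by positivity)]; linarith⟩⟩

@[fun_prop]
lemma add (hf : HasPolynomialGrowth f) (hg : HasPolynomialGrowth g) :
    HasPolynomialGrowth fun y => f y + g y := by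
  obtain ⟨p, hp⟩ := hf
  obtain ⟨q, hq⟩ := hg
  have hmono {m n : ℕ} (h : m ≤ n) :
      (fun y : ℝ => (1 + y) ^ m) =O[𝓟 (Set.Ici 0)] fun y => (1 + y) ^ n :=
    isBigO_principal.2 ⟨1, fun y (hy : 0 ≤ y) => by
      rw [Real.norm_of_nonneg (by positivity), Real.norm_of_nonneg (by positivity), one_mul]
      exact pow_le_pow_right₀ (by linarith) h⟩
  exact ⟨max p q, (hp.trans (hmono (le_max_left p q))).add (hq.trans (hmono (le_max_right p q)))⟩

@[fun_prop]
lemma mul (hf : HasPolynomialGrowth f) (hg : HasPolynomialGrowth g) :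
    HasPolynomialGrowth fun y => f y * g y := by
  obtain ⟨p, hp⟩ := hf
  obtain ⟨q, hq⟩ := hg
  exact ⟨p + q, by simpa only [pow_add] using hp.mul hq⟩

@[fun_prop]
lemma sub (hf : HasPolynomialGrowth f) (hg : HasPolynomialGrowth g) :
    HasPolynomialGrowth fun y => f y - g y := by
  simpa [sub_eq_add_neg] using hf.add ((const (-1)).mul hg)

@[fun_prop]
lemma pow (hf : HasPolynomialGrowth f) (n : ℕ) : HasPolynomialGrowth fun y => f y ^ n := by
  obtain ⟨p, hp⟩ := hf
  exact ⟨p * n, by simpa only [pow_mul] using hp.pow n⟩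

@[fun_prop]
lemma abs (hf : HasPolynomialGrowth f) : HasPolynomialGrowth fun y => |f y| := by
  obtain ⟨p, hp⟩ := hf
  exact ⟨p, hp.norm_left⟩

@[fun_prop]
lemma sum {ι : Type*} (s : Finset ι) {F : ι → ℝ → ℝ} (h : ∀ i, HasPolynomialGrowth (F i)) :
    HasPolynomialGrowth fun y => ∑ i ∈ s, F i y := by
  classical
  induction s using Finset.induction_on with
  | empty => simpa using const 0
  | insert i s hi ih => simpa only [Finset.sum_insert hi] using (h i).add ih

lemma rpow {a : ℝ} (ha : 0 ≤ a) : HasPolynomialGrowth fun y => y ^ a := by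
  refine ⟨⌈a⌉₊, isBigO_principal.2 ⟨1, fun y (hy : 0 ≤ y) => ?_⟩⟩
  rw [Real.norm_of_nonneg (Real.rpow_nonneg hy a), Real.norm_of_nonneg (by positivity), one_mul]
  calc y ^ a ≤ (1 + y) ^ a := Real.rpow_le_rpow hy (by linarith) ha
    _ ≤ (1 + y) ^ (⌈a⌉₊ : ℝ) := Real.rpow_le_rpow_of_exponent_le (by linarith) (Nat.le_ceil a)
    _ = (1 + y) ^ ⌈a⌉₊ := Real.rpow_natCast _ _

lemma exists_abs_le_of_isBigO_nhds_one (hf : HasPolynomialGrowth f) {L : ℕ}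
    (h : f =O[𝓝 1] fun y => (y - 1) ^ L) :
    ∃ C > 0, ∃ p : ℕ, ∀ y, 0 ≤ y → |f y| ≤ C * (|y - 1| ^ L + |y - 1| ^ (L + p)) := by
  obtain ⟨A, hA, p, hfar⟩ := hf.exists_pos
  obtain ⟨B, hB, hnear⟩ := h.exists_pos
  obtain ⟨δ, hδ, hnear⟩ := Metric.eventually_nhds_iff.1 hnear.bound
  set K := 1 + 2 / δ with hK
  refine ⟨B + A * K ^ p * (1 / δ) ^ L, by positivity, p, fun y hy => ?_⟩
  rw [add_mul, mul_add, mul_add]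
  rcases lt_or_ge |y - 1| δ with hlt | hge
  · have := hnear (y := y) hlt
    rw [norm_pow, Real.norm_eq_abs, Real.norm_eq_abs] at this
    refine this.trans ?_
    linarith [show 0 ≤ B * |y - 1| ^ (L + p) by positivity,
      show 0 ≤ A * K ^ p * (1 / δ) ^ L * |y - 1| ^ L +
        A * K ^ p * (1 / δ) ^ L * |y - 1| ^ (L + p) by positivity]
  · have hδ1 : 1 ≤ 1 / δ * |y - 1| := by rwa [one_div_mul_eq_div, one_le_div hδ]
    have hK1 : 1 + y ≤ K * |y - 1| := by
      rw [hK]; linarith [le_abs_self (y - 1), show 2 / δ * |y - 1| = 2 * (1 / δ * |y - 1|) by ring]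
    have hy1 : (1 + y) ^ p ≤ K ^ p * (1 / δ) ^ L * |y - 1| ^ (L + p) := calc
      (1 + y) ^ p ≤ (K * |y - 1|) ^ p := pow_le_pow_left₀ (by positivity) hK1 p
      _ ≤ (K * |y - 1|) ^ p * (1 / δ * |y - 1|) ^ L :=
        le_mul_of_one_le_right (by positivity) (one_le_pow₀ hδ1)
      _ = _ := by rw [mul_pow, mul_pow]; ring
    refine (hfar y hy).trans ((mul_le_mul_of_nonneg_left hy1 hA.le).trans ?_)
    linarith [show 0 ≤ B * |y - 1| ^ L + B * |y - 1| ^ (L + p) by positivity,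
      show 0 ≤ A * K ^ p * (1 / δ) ^ L * |y - 1| ^ L by positivity]

end HasPolynomialGrowth

end PolynomialGrowth

section RealInequalities

open Asymptotics Filter Topology

lemma ringChoose_succ (a : ℝ) (n : ℕ) :
    Ring.choose a (n + 1) = Ring.choose a n * (a - n) / (n + 1) := by
  simp only [Ring.choose_eq_smul, descPochhammer_succ_right, Polynomial.smeval_mul,
    Polynomial.smeval_sub, Polynomial.smeval_X, Polynomial.smeval_natCast, Nat.factorial_succ,
    smul_eq_mul, pow_one, pow_zero, nsmul_eq_mul, mul_one, Nat.cast_mul, Nat.cast_succ]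
  field_simp

lemma rpow_sub_binomial_isBigO (a : ℝ) (L : ℕ) :
    (fun y : ℝ => y ^ a - ∑ i ∈ Finset.range L, Ring.choose a i * (y - 1) ^ i)
      =O[𝓝 1] fun y => (y - 1) ^ L := by
  have hsub : Tendsto (fun y : ℝ => y - 1) (𝓝 1) (𝓝 0) :=
    (continuous_sub_right 1).tendsto' 1 0 (sub_self 1)
  have hseries := (Real.one_add_rpow_hasFPowerSeriesAt_zero (a := a)).isBigO_sub_partialSum_pow L
  refine (hseries.comp_tendsto hsub).congr' (.of_forall fun y => ?_) .rfl |>.trans ?_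
  · simp [FormalMultilinearSeries.partialSum, binomialSeries, FormalMultilinearSeries.ofScalars,
      mul_comm]
  · simpa only [← norm_pow] using! (isBigO_refl (fun y : ℝ => (y - 1) ^ L) _).norm_left

lemma mul_rpow_sub_isBigO {α : Type*} {l : Filter α} {f g h : α → ℝ}
    (hf : (fun x => f x - 1) =O[l] h) (hg : (fun x => g x - 1) =O[l] h) (hh : Tendsto h l (𝓝 0))
    (a : ℝ) : (fun x => f x * g x ^ a - (f x + a * (g x - 1))) =O[l] fun x => h x ^ 2 := by
  have hlim {k : α → ℝ} (hk : (fun x => k x - 1) =O[l] h) : Tendsto k l (𝓝 1) := by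
    simpa using (hk.trans_tendsto hh).add_const 1
  have hbinom : (fun x => g x ^ a - (1 + a * (g x - 1))) =O[l] fun x => h x ^ 2 := by
    refine (((rpow_sub_binomial_isBigO a 2).comp_tendsto (hlim hg)).trans (hg.pow 2)).congr_left
      fun x => ?_
    simp [Finset.sum_range_succ]
  have hmul := (((hlim hf).isBigO_one ℝ).mul hbinom).add ((hf.mul hg).const_mul_left a
    |>.congr_right fun x => (sq (h x)).symm |>.trans (one_mul _).symm)
  refine hmul.congr (fun x => ?_) fun x => one_mul _
  ring

lemma exists_abs_rpow_sub_binomial_le {a : ℝ} (ha : 0 ≤ a) (L : ℕ) :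
    ∃ C > 0, ∃ p : ℕ, ∀ y : ℝ, 0 ≤ y →
      |y ^ a - ∑ i ∈ Finset.range L, Ring.choose a i * (y - 1) ^ i|
        ≤ C * (|y - 1| ^ L + |y - 1| ^ (L + p)) := by
  have := HasPolynomialGrowth.rpow ha
  exact HasPolynomialGrowth.exists_abs_le_of_isBigO_nhds_one (by fun_prop)
    (rpow_sub_binomial_isBigO a L)

lemma min_one_mul_one_sub_le_one_sub_rpow {a y : ℝ} (ha : 0 ≤ a) (hy0 : 0 ≤ y) (hy1 : y ≤ 1) :
    min 1 a * (1 - y) ≤ 1 - y ^ a := by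
  rcases le_total a 1 with h | h
  · have := rpow_one_add_le_one_add_mul_self (s := y - 1) (by linarith) ha h
    rw [add_sub_cancel] at this
    rw [min_eq_right h]
    linarith
  · have := Real.rpow_le_rpow_of_exponent_ge' hy0 hy1 zero_le_one h
    rw [Real.rpow_one] at this
    rw [min_eq_left h, one_mul]
    linarith

lemma min_one_mul_sub_one_le_rpow_sub_one_mul {a y : ℝ} (ha : 0 ≤ a) (hy : 1 ≤ y) :
    min 1 a * (y - 1) ≤ (y ^ a - 1) * y := by
  have hy0 : 0 < y := one_pos.trans_le hy
  have hya : 1 ≤ y ^ a := Real.one_le_rpow hy ha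
  have hinv := min_one_mul_one_sub_le_one_sub_rpow ha (inv_nonneg.2 hy0.le)
    (inv_le_one_of_one_le₀ hy)
  calc min 1 a * (y - 1) = min 1 a * (1 - y⁻¹) * y := by field_simp
    _ ≤ (1 - y⁻¹ ^ a) * y := mul_le_mul_of_nonneg_right hinv hy0.le
    _ = (y ^ a - 1) / y ^ a * y := by rw [Real.inv_rpow hy0.le]; field_simp
    _ ≤ (y ^ a - 1) * y :=
      mul_le_mul_of_nonneg_right (div_le_self (sub_nonneg.2 hya) hya) hy0.le

lemma min_one_mul_sq_le_rpow_sub_one_mul {a y : ℝ} (ha : 0 ≤ a) (hy : 0 ≤ y) :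
    min 1 a * (y - 1) ^ 2 ≤ (y ^ a - 1) * ((y - 1) * (y + 1)) := by
  have hmin : 0 ≤ min 1 a := le_min zero_le_one ha
  rcases le_total y 1 with h | h
  · have := mul_le_mul_of_nonneg_right (min_one_mul_one_sub_le_one_sub_rpow ha hy h)
      (mul_nonneg (sub_nonneg.2 h) (by linarith : 0 ≤ y + 1))
    nlinarith [mul_nonneg (mul_nonneg hmin (sq_nonneg (y - 1))) hy]
  · have := mul_le_mul_of_nonneg_right (min_one_mul_sub_one_le_rpow_sub_one_mul ha h)
      (sub_nonneg.2 h)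
    nlinarith [mul_nonneg (sub_nonneg.2 (Real.one_le_rpow h ha)) (sub_nonneg.2 h)]

lemma abs_add_pow_sub_pow_le (x : ℝ) {u : ℝ} (hu : 0 ≤ u) (m : ℕ) :
    |(x + u) ^ (m + 1) - x ^ (m + 1)| ≤ (m + 1) * 2 ^ m * u * (|x| ^ m + u ^ m) := by
  have hmax : max |x + u| |x| ≤ |x| + u :=
    max_le ((abs_add_le x u).trans_eq (by rw [abs_of_nonneg hu])) (le_add_of_nonneg_right hu)
  calc |(x + u) ^ (m + 1) - x ^ (m + 1)|
      ≤ u * (m + 1) * max |x + u| |x| ^ m := by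
        simpa [abs_of_nonneg hu] using abs_pow_sub_pow_le (x + u) x (m + 1)
    _ ≤ u * (m + 1) * (2 ^ m * (|x| ^ m + u ^ m)) := by
        refine mul_le_mul_of_nonneg_left ?_ (by positivity)
        calc max |x + u| |x| ^ m ≤ (|x| + u) ^ m := pow_le_pow_left₀ (by positivity) hmax m
          _ ≤ 2 ^ (m - 1) * (|x| ^ m + u ^ m) := add_pow_le (abs_nonneg x) hu m
          _ ≤ 2 ^ m * (|x| ^ m + u ^ m) := by gcongr <;> simp
    _ = _ := by ring

end RealInequalities

section ScaledCMP

open MeasureTheory Filter Topology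

/-- The unnormalized mass of `j` under `CMP(λ, ν)` at `λ = u ^ (-ν)`. In terms of `u` the location
of the distribution is `1 / u` for every `ν`. -/
noncomputable def cmpWeight (ν u : ℝ) (j : ℕ) : ℝ := (u ^ (-ν)) ^ j / (j.factorial : ℝ) ^ ν

/-- The law of `u * X` for `X ∼ CMP(u ^ (-ν), ν)`, which concentrates at `1` as `u` tends to `0`. -/
noncomputable def scaledCMP (ν u : ℝ) : Measure ℝ :=
  Measure.sum fun j : ℕ =>
    ENNReal.ofReal (cmpWeight ν u j / cmpZ (u ^ (-ν)) ν) • Measure.dirac (u * j)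

variable {ν u : ℝ} {f : ℝ → ℝ}

lemma cmpWeight_pos (ν : ℝ) (hu : 0 < u) (j : ℕ) : 0 < cmpWeight ν u j := by
  rw [cmpWeight]; positivity

lemma rpow_mul_cmpWeight_succ (ν : ℝ) (hu : 0 < u) (j : ℕ) :
    (u * (j + 1 : ℕ)) ^ ν * cmpWeight ν u (j + 1) = cmpWeight ν u j := by
  rw [cmpWeight, cmpWeight, Nat.factorial_succ, Nat.cast_mul, Real.mul_rpow hu.le (by positivity),
    Real.mul_rpow (by positivity) (by positivity), Real.rpow_neg hu.le, pow_succ]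
  field_simp

lemma cmpWeight_succ (ν : ℝ) (hu : 0 < u) (j : ℕ) :
    cmpWeight ν u (j + 1) = (u * (j + 1 : ℕ)) ^ (-ν) * cmpWeight ν u j := by
  rw [← rpow_mul_cmpWeight_succ ν hu j, Real.rpow_neg (by positivity), inv_mul_cancel_left₀]
  positivity

lemma summable_pow_mul_cmpWeight (hν : 0 < ν) (hu : 0 < u) (p : ℕ) :
    Summable fun j : ℕ => ((j : ℝ) + 1) ^ p * cmpWeight ν u j := by
  have hw (j : ℕ) := cmpWeight_pos ν hu j
  have hpos (j : ℕ) : 0 < ((j : ℝ) + 1) ^ p * cmpWeight ν u j := mul_pos (by positivity) (hw j)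
  have hx : Tendsto (fun j : ℕ => u * ((j + 1 : ℕ) : ℝ)) atTop atTop :=
    (tendsto_natCast_atTop_atTop.comp (tendsto_add_atTop_nat 1)).const_mul_atTop hu
  have hratio : Tendsto (fun j : ℕ => 2 ^ p * (u * ((j + 1 : ℕ) : ℝ)) ^ (-ν)) atTop (𝓝 0) := by
    simpa using ((tendsto_rpow_neg_atTop hν).comp hx).const_mul (2 ^ p)
  refine summable_of_ratio_test_tendsto_lt_one zero_lt_one (.of_forall fun j => (hpos j).ne')
    (squeeze_zero (fun j => by positivity) (fun j => ?_) hratio)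
  rw [Real.norm_of_nonneg (hpos _).le, Real.norm_of_nonneg (hpos _).le, div_le_iff₀ (hpos j),
    cmpWeight_succ ν hu]
  calc (((j + 1 : ℕ) : ℝ) + 1) ^ p * ((u * (j + 1 : ℕ)) ^ (-ν) * cmpWeight ν u j)
      ≤ (2 * ((j : ℝ) + 1)) ^ p * ((u * (j + 1 : ℕ)) ^ (-ν) * cmpWeight ν u j) := by
        have := hw j
        gcongr
        push_cast
        linarith [(j.cast_nonneg : (0 : ℝ) ≤ j)]
    _ = _ := by rw [mul_pow]; ring

lemma HasPolynomialGrowth.summable (hf : HasPolynomialGrowth f) (hν : 0 < ν) (hu : 0 < u) :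
    Summable fun j : ℕ => f (u * j) * cmpWeight ν u j := by
  obtain ⟨C, hC, p, h⟩ := hf.exists_pos
  refine .of_norm_bounded ((summable_pow_mul_cmpWeight hν hu p).mul_left (C * (1 + u) ^ p))
    fun j => ?_
  have : (0 : ℝ) ≤ j := j.cast_nonneg
  have hw := cmpWeight_pos ν hu j
  rw [norm_mul, Real.norm_eq_abs, Real.norm_of_nonneg hw.le]
  calc |f (u * j)| * cmpWeight ν u j ≤ C * (1 + u * j) ^ p * cmpWeight ν u j :=
        mul_le_mul_of_nonneg_right (h _ (by positivity)) hw.le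
    _ ≤ C * ((1 + u) * (j + 1)) ^ p * cmpWeight ν u j := by gcongr; nlinarith
    _ = _ := by rw [mul_pow]; ring

lemma cmpZ_eq_tsum_cmpWeight (ν u : ℝ) : cmpZ (u ^ (-ν)) ν = ∑' j, cmpWeight ν u j := rfl

lemma summable_cmpWeight (hν : 0 < ν) (hu : 0 < u) : Summable (cmpWeight ν u) := by
  simpa using summable_pow_mul_cmpWeight hν hu 0

lemma cmpZ_pos (hν : 0 < ν) (hu : 0 < u) : 0 < cmpZ (u ^ (-ν)) ν :=
  (summable_cmpWeight hν hu).tsum_pos (fun j => (cmpWeight_pos ν hu j).le) 0 (cmpWeight_pos ν hu 0)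

lemma cmpWeight_div_cmpZ_nonneg (ν : ℝ) (hu : 0 < u) (j : ℕ) :
    0 ≤ cmpWeight ν u j / cmpZ (u ^ (-ν)) ν :=
  div_nonneg (cmpWeight_pos ν hu j).le (tsum_nonneg fun i => (cmpWeight_pos ν hu i).le)

lemma isProbabilityMeasure_scaledCMP (hν : 0 < ν) (hu : 0 < u) :
    IsProbabilityMeasure (scaledCMP ν u) := by
  refine HasSum.isProbabilityMeasure_sum_dirac (cmpWeight_div_cmpZ_nonneg ν hu) ?_
  simpa only [← cmpZ_eq_tsum_cmpWeight, div_self (cmpZ_pos hν hu).ne'] using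
    (summable_cmpWeight hν hu).hasSum.div_const (cmpZ (u ^ (-ν)) ν)

lemma integral_scaledCMP (ν : ℝ) (hu : 0 < u) (f : ℝ → ℝ) :
    ∫ y, f y ∂scaledCMP ν u = (∑' j : ℕ, f (u * j) * cmpWeight ν u j) / cmpZ (u ^ (-ν)) ν := by
  rw [scaledCMP, integral_sum_dirac (by simp), ← tsum_div_const]
  refine tsum_congr fun j => ?_
  rw [ENNReal.toReal_ofReal (cmpWeight_div_cmpZ_nonneg ν hu j), smul_eq_mul]
  ring

lemma HasPolynomialGrowth.integrable (hf : HasPolynomialGrowth f) (hν : 0 < ν) (hu : 0 < u) :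
    Integrable f (scaledCMP ν u) := by
  refine (integrable_sum_dirac_iff (by simp)).2 ?_
  refine (hf.abs.summable hν hu).div_const (cmpZ (u ^ (-ν)) ν) |>.congr fun j => ?_
  rw [ENNReal.toReal_ofReal (cmpWeight_div_cmpZ_nonneg ν hu j), Real.norm_eq_abs]
  ring

lemma ae_nonneg_scaledCMP (ν : ℝ) (hu : 0 < u) : ∀ᵐ y ∂scaledCMP ν u, 0 ≤ y := by
  rw [scaledCMP, Measure.ae_sum_iff]
  exact fun j => Measure.ae_smul_measure ((ae_dirac_iff measurableSet_Ici).2 (by positivity)) _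

lemma integral_scaledCMP_mono (hν : 0 < ν) (hu : 0 < u) {g : ℝ → ℝ} (hf : HasPolynomialGrowth f)
    (hg : HasPolynomialGrowth g) (hle : ∀ y, 0 ≤ y → f y ≤ g y) :
    ∫ y, f y ∂scaledCMP ν u ≤ ∫ y, g y ∂scaledCMP ν u :=
  integral_mono_ae (hf.integrable hν hu) (hg.integrable hν hu)
    ((ae_nonneg_scaledCMP ν hu).mono hle)

/-- Stein's identity: the CMP weights satisfy `j ^ ν * w j = u ^ (-ν) * w (j - 1)`. -/
lemma integral_rpow_mul_scaledCMP (hν : ν ≠ 0) (hu : 0 < u) (f : ℝ → ℝ) :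
    ∫ y, y ^ ν * f y ∂scaledCMP ν u = ∫ y, f (y + u) ∂scaledCMP ν u := by
  have hsupp : Function.support (fun j : ℕ => (u * j) ^ ν * f (u * j) * cmpWeight ν u j) ⊆
      Set.range Nat.succ := by
    intro j hj
    cases j with
    | zero => simp [Real.zero_rpow hν] at hj
    | succ j => exact ⟨j, rfl⟩
  rw [integral_scaledCMP ν hu, integral_scaledCMP ν hu, ← Nat.succ_injective.tsum_eq hsupp]
  congr 1
  refine tsum_congr fun j => ?_
  rw [← rpow_mul_cmpWeight_succ ν hu j, Nat.succ_eq_add_one, Nat.cast_succ]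
  ring_nf

lemma hasDerivAt_cmpWeight (ν : ℝ) (hu : 0 < u) (j : ℕ) :
    HasDerivAt (fun v => cmpWeight ν v j) (-(ν * j / u) * cmpWeight ν u j) u := by
  have h := ((Real.hasDerivAt_rpow_const (p := -ν) (.inl hu.ne')).pow j).div_const
    ((j.factorial : ℝ) ^ ν)
  refine h.congr_deriv ?_
  rw [cmpWeight, Real.rpow_sub_one hu.ne']
  cases j with
  | zero => simp
  | succ j => rw [Nat.add_sub_cancel, pow_succ]; field_simp

lemma cmpWeight_anti (hν : 0 ≤ ν) (hu : 0 < u) {v : ℝ} (huv : u ≤ v) (j : ℕ) :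
    cmpWeight ν v j ≤ cmpWeight ν u j := by
  have := Real.rpow_le_rpow_of_nonpos hu huv (neg_nonpos.2 hν)
  have := hu.trans_le huv
  rw [cmpWeight, cmpWeight]
  gcongr

lemma hasDerivAt_tsum_mul_cmpWeight (hν : 0 < ν) (hu : 0 < u) {f' : ℝ → ℝ}
    (hderiv : ∀ y, HasDerivAt f (f' y) y) (hf : HasPolynomialGrowth f)
    (hf' : HasPolynomialGrowth f') :
    HasDerivAt (fun v => ∑' j : ℕ, f (v * j) * cmpWeight ν v j)
      (∑' j : ℕ, (j * f' (u * j) - ν / u * j * f (u * j)) * cmpWeight ν u j) u := by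
  obtain ⟨C, hC, p, hfC⟩ := hf.exists_pos
  obtain ⟨C', hC', p', hfC'⟩ := hf'.exists_pos
  set a := u / 2
  have ha : 0 < a := half_pos hu
  have hsum : Summable fun j : ℕ => (1 / a * (a * j) * (C' * (1 + 4 * (a * j)) ^ p') +
      ν / a * (1 / a * (a * j)) * (C * (1 + 4 * (a * j)) ^ p)) * cmpWeight ν a j :=
    HasPolynomialGrowth.summable (f := fun y => 1 / a * y * (C' * (1 + 4 * y) ^ p') +
      ν / a * (1 / a * y) * (C * (1 + 4 * y) ^ p)) (by fun_prop) hν ha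
  refine hasDerivAt_tsum_of_isPreconnected (t := Set.Ioo a (2 * u)) hsum isOpen_Ioo
    isPreconnected_Ioo
    (g' := fun (j : ℕ) v => (j * f' (v * j) - ν / v * j * f (v * j)) * cmpWeight ν v j)
    (fun j v hv => ?_) (fun j v hv => ?_) (y₀ := u) ?_ (hf.summable hν hu) ?_
  · have hv0 : 0 < v := ha.trans hv.1
    refine (((hderiv (v * j)).comp v (hasDerivAt_mul_const (j : ℝ))).mul
      (hasDerivAt_cmpWeight ν hv0 j)).congr_deriv ?_
    simp only [Function.comp_apply]
    ring
  · have hv0 : 0 < v := ha.trans hv.1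
    have hj : (0 : ℝ) ≤ j := j.cast_nonneg
    have hvj : v * j ≤ 4 * (a * j) := by nlinarith [hv.2, show a = u / 2 from rfl]
    have hw := cmpWeight_pos ν hv0 j
    rw [norm_mul, Real.norm_of_nonneg hw.le, one_div, inv_mul_cancel_left₀ ha.ne']
    refine mul_le_mul ((norm_sub_le _ _).trans (add_le_add ?_ ?_))
      (cmpWeight_anti hν.le ha hv.1.le j) hw.le (by positivity)
    · rw [norm_mul, Real.norm_of_nonneg hj]
      exact mul_le_mul_of_nonneg_left ((hfC' _ (by positivity)).trans (by gcongr)) hj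
    · rw [norm_mul, Real.norm_of_nonneg (by positivity)]
      refine mul_le_mul ?_ ((hfC _ (by positivity)).trans (by gcongr)) (norm_nonneg _)
        (by positivity)
      have := hv.1.le
      gcongr
  all_goals exact ⟨half_lt_self hu, by linarith⟩

/-- The scale `u` enters both through `y = u * j` and through the weights, an exponential family
whose score is `-ν * j / u`; the second dependence contributes the covariance. -/
lemma hasDerivAt_integral_scaledCMP (hν : 0 < ν) (hu : 0 < u) {f' : ℝ → ℝ}
    (hderiv : ∀ y, HasDerivAt f (f' y) y) (hf : HasPolynomialGrowth f)
    (hf' : HasPolynomialGrowth f') :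
    HasDerivAt (fun v => ∫ y, f y ∂scaledCMP ν v)
      ((∫ y, y * f' y ∂scaledCMP ν u) / u - ν / u ^ 2 * (∫ y, y * f y ∂scaledCMP ν u -
        (∫ y, y ∂scaledCMP ν u) * ∫ y, f y ∂scaledCMP ν u)) u := by
  have hZ : HasDerivAt (fun v => cmpZ (v ^ (-ν)) ν)
      (-(ν / u ^ 2 * ∑' j : ℕ, u * j * cmpWeight ν u j)) u := by
    have h := hasDerivAt_tsum_mul_cmpWeight hν hu (fun y => hasDerivAt_const y (1 : ℝ))
      (by fun_prop) (by fun_prop)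
    simp only [one_mul, ← cmpZ_eq_tsum_cmpWeight] at h
    refine h.congr_deriv ?_
    rw [← tsum_mul_left, ← tsum_neg]
    exact tsum_congr fun j => by field_simp; ring
  have hZ0 := (cmpZ_pos hν hu).ne'
  have hF := (hasDerivAt_tsum_mul_cmpWeight hν hu hderiv hf hf').div hZ hZ0
  refine (hF.congr_of_eventuallyEq ?_).congr_deriv ?_
  · filter_upwards [lt_mem_nhds hu] with v hv using integral_scaledCMP ν hv f
  have hsplit : ∑' j : ℕ, (j * f' (u * j) - ν / u * j * f (u * j)) * cmpWeight ν u j =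
      (∑' j : ℕ, u * j * f' (u * j) * cmpWeight ν u j) / u -
        ν / u ^ 2 * ∑' j : ℕ, u * j * f (u * j) * cmpWeight ν u j := by
    have h1 := (HasPolynomialGrowth.id.mul hf').summable hν hu
    have h2 := (HasPolynomialGrowth.id.mul hf).summable hν hu
    rw [← tsum_div_const, ← tsum_mul_left, ← (h1.div_const u).tsum_sub (h2.mul_left _)]
    exact tsum_congr fun j => by field_simp
  rw [hsplit, integral_scaledCMP ν hu, integral_scaledCMP ν hu, integral_scaledCMP ν hu,
    integral_scaledCMP ν hu]
  field_simp
  ring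

end ScaledCMP

section MomentBounds

open MeasureTheory Filter Topology Asymptotics

variable {ν u : ℝ}

lemma abs_pow_le_even_add_even (x : ℝ) (k : ℕ) :
    |x| ^ k ≤ x ^ (2 * (k / 2)) + x ^ (2 * (k / 2 + 1)) := by
  rw [← (even_two_mul _).pow_abs x, ← (even_two_mul (k / 2 + 1)).pow_abs x]
  rcases le_total |x| 1 with hx | hx
  · have := pow_le_pow_of_le_one (abs_nonneg x) hx (Nat.mul_div_le k 2)
    linarith [pow_nonneg (abs_nonneg x) (2 * (k / 2 + 1))]
  · have := pow_le_pow_right₀ hx (show k ≤ 2 * (k / 2 + 1) by lia)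
    linarith [pow_nonneg (abs_nonneg x) (2 * (k / 2))]

lemma odd_pow_mul_add_two_increment_le (x : ℝ) (hu : 0 ≤ u) (hu1 : u ≤ 1) (k : ℕ) :
    (x + u) ^ (2 * k + 1) * (x + u + 2) - x ^ (2 * k + 1) * (x + 2) ≤
      (2 * k + 2) * 4 ^ (k + 1) * u * (x ^ (2 * k) + u ^ (2 * k) + x ^ (2 * (k + 1))) := by
  have h_odd := (abs_le.1 (abs_add_pow_sub_pow_le x hu (2 * k))).2
  have h_even := (abs_le.1 (abs_add_pow_sub_pow_le x hu (2 * k + 1))).2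
  have hx := abs_pow_le_even_add_even x (2 * k + 1)
  rw [show (2 * k + 1) / 2 = k by lia] at hx
  have hu2 : u ^ (2 * k + 1) ≤ u ^ (2 * k) := pow_le_pow_of_le_one hu hu1 (by lia)
  have hx0 : 0 ≤ x ^ (2 * (k + 1)) := (even_two_mul _).pow_nonneg x
  have hx1 : 0 ≤ x ^ (2 * k) := (even_two_mul _).pow_nonneg x
  have h4 : (2 : ℝ) ^ (2 * k) = 4 ^ k := by rw [pow_mul]; norm_num
  rw [(even_two_mul _).pow_abs, h4] at h_odd
  rw [pow_succ 2, h4] at h_even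
  push_cast at h_odd h_even
  calc (x + u) ^ (2 * k + 1) * (x + u + 2) - x ^ (2 * k + 1) * (x + 2)
      = 2 * ((x + u) ^ (2 * k + 1) - x ^ (2 * k + 1)) +
          ((x + u) ^ (2 * k + 1 + 1) - x ^ (2 * k + 1 + 1)) := by ring
    _ ≤ 2 * ((2 * k + 1) * 4 ^ k * u * (x ^ (2 * k) + u ^ (2 * k))) +
          (2 * k + 1 + 1) * (4 ^ k * 2) * u *
            (x ^ (2 * k) + x ^ (2 * (k + 1)) + u ^ (2 * k)) := by
        refine add_le_add (mul_le_mul_of_nonneg_left h_odd zero_le_two) (h_even.trans ?_)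
        gcongr
    _ ≤ 2 * ((2 * k + 2) * 4 ^ k * u * (x ^ (2 * k) + (u ^ (2 * k) + x ^ (2 * (k + 1))))) +
          (2 * k + 1 + 1) * (4 ^ k * 2) * u *
            (x ^ (2 * k) + x ^ (2 * (k + 1)) + u ^ (2 * k)) := by
        gcongr
        · norm_num
        · exact le_add_of_nonneg_right hx0
    _ = _ := by ring

lemma min_one_mul_integral_even_pow_le (hν : 0 < ν) (hu : 0 < u) (hu1 : u ≤ 1) (k : ℕ) :
    min 1 ν * ∫ y, (y - 1) ^ (2 * (k + 1)) ∂scaledCMP ν u ≤ (2 * k + 2) * 4 ^ (k + 1) * u *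
      (∫ y, (y - 1) ^ (2 * k) ∂scaledCMP ν u + u ^ (2 * k) +
        ∫ y, (y - 1) ^ (2 * (k + 1)) ∂scaledCMP ν u) := by
  have := HasPolynomialGrowth.rpow hν.le
  have := isProbabilityMeasure_scaledCMP hν hu
  have hint {f : ℝ → ℝ} (hf : HasPolynomialGrowth f) := hf.integrable hν hu
  set f : ℝ → ℝ := fun y => (y - 1) ^ (2 * k + 1) * (y + 1)
  have hf : HasPolynomialGrowth f := by fun_prop
  have hfu : HasPolynomialGrowth fun y => f (y + u) := by unfold f; fun_prop
  set D : ℝ := (2 * k + 2) * 4 ^ (k + 1)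
  calc min 1 ν * ∫ y, (y - 1) ^ (2 * (k + 1)) ∂scaledCMP ν u
      = ∫ y, min 1 ν * (y - 1) ^ (2 * (k + 1)) ∂scaledCMP ν u := (integral_const_mul _ _).symm
    _ ≤ ∫ y, (y ^ ν * f y - f y) ∂scaledCMP ν u := by
        refine integral_scaledCMP_mono hν hu (by fun_prop) (by fun_prop) fun y hy => ?_
        have := mul_le_mul_of_nonneg_left (min_one_mul_sq_le_rpow_sub_one_mul hν.le hy)
          ((even_two_mul k).pow_nonneg (y - 1))
        calc _ = (y - 1) ^ (2 * k) * (min 1 ν * (y - 1) ^ 2) := by ring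
          _ ≤ _ := this
          _ = _ := by ring
    _ = ∫ y, (f (y + u) - f y) ∂scaledCMP ν u := by
        rw [integral_sub (hint (by fun_prop)) (hint hf), integral_rpow_mul_scaledCMP hν.ne' hu,
          integral_sub (hint hfu) (hint hf)]
    _ ≤ ∫ y, D * u * ((y - 1) ^ (2 * k) + u ^ (2 * k) + (y - 1) ^ (2 * (k + 1)))
          ∂scaledCMP ν u := by
        refine integral_scaledCMP_mono hν hu (hfu.sub hf) (by fun_prop) fun y _ => ?_
        have := odd_pow_mul_add_two_increment_le (y - 1) hu.le hu1 k
        simp only [f, D]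
        convert this using 3 <;> ring
    _ = _ := by
        rw [integral_const_mul, integral_add (hint (by fun_prop)) (hint (by fun_prop)),
          integral_add (hint (by fun_prop)) (hint (by fun_prop)), integral_const,
          probReal_univ, one_smul]

lemma integral_even_pow_isBigO (hν : 0 < ν) (k : ℕ) :
    (fun u => ∫ y, (y - 1) ^ (2 * k) ∂scaledCMP ν u) =O[𝓝[>] 0] fun u => u ^ k := by
  induction k with
  | zero =>
    refine IsBigO.of_bound 1 (eventually_mem_nhdsWithin.mono fun u hu => ?_)
    have := isProbabilityMeasure_scaledCMP hν hu
    simp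
  | succ k ih =>
    set c := min 1 ν
    have hc : 0 < c := lt_min one_pos hν
    set D : ℝ := (2 * k + 2) * 4 ^ (k + 1)
    have hsmall : ∀ᶠ u : ℝ in 𝓝[>] 0, D * u ≤ c / 2 ∧ u ≤ 1 := by
      refine nhdsWithin_le_nhds (Eventually.and ?_ (eventually_le_nhds one_pos))
      exact ((continuous_const_mul D).tendsto' 0 0 (mul_zero D)).eventually_le_const (half_pos hc)
    have hrec : (fun u => ∫ y, (y - 1) ^ (2 * (k + 1)) ∂scaledCMP ν u) =O[𝓝[>] 0]
        fun u => u * (∫ y, (y - 1) ^ (2 * k) ∂scaledCMP ν u + u ^ (2 * k)) := by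
      refine IsBigO.of_bound (2 * D / c) ?_
      filter_upwards [hsmall, self_mem_nhdsWithin] with u hu (hu0 : 0 < u)
      have hI (m : ℕ) : 0 ≤ ∫ y, (y - 1) ^ (2 * m) ∂scaledCMP ν u :=
        integral_nonneg fun y => (even_two_mul m).pow_nonneg _
      have hle := min_one_mul_integral_even_pow_le hν hu0 hu.2 k
      have habsorb := mul_le_mul_of_nonneg_right hu.1 (hI (k + 1))
      have := hI k
      rw [Real.norm_of_nonneg (hI _), Real.norm_of_nonneg (by positivity), div_mul_eq_mul_div,
        le_div_iff₀ hc]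
      linarith
    simpa only [pow_succ'] using hrec.trans ((isBigO_refl _ _).mul
      (ih.add (pow_isBigO_pow_of_le nhdsWithin_le_nhds (by lia))))

lemma integral_abs_pow_isBigO (hν : 0 < ν) {k n : ℕ} (h : 2 * n ≤ k) :
    (fun u => ∫ y, |y - 1| ^ k ∂scaledCMP ν u) =O[𝓝[>] 0] fun u => u ^ n := by
  have heven (m : ℕ) (hm : n ≤ m) := (integral_even_pow_isBigO hν m).trans
    (pow_isBigO_pow_of_le nhdsWithin_le_nhds hm)
  refine IsBigO.trans (IsBigO.of_bound 1 ?_)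
    ((heven (k / 2) (by lia)).add (heven (k / 2 + 1) (by lia)))
  filter_upwards [self_mem_nhdsWithin] with u hu
  have hle := integral_scaledCMP_mono hν hu (by fun_prop) (by fun_prop)
    fun y _ => abs_pow_le_even_add_even (y - 1) k
  rw [integral_add (HasPolynomialGrowth.integrable (by fun_prop) hν hu)
    (HasPolynomialGrowth.integrable (by fun_prop) hν hu)] at hle
  rw [one_mul, Real.norm_of_nonneg (integral_nonneg fun y => by positivity)]
  exact hle.trans (le_abs_self _)

end MomentBounds

section MomentExpansions

open MeasureTheory Topology Asymptotics

/-- The `k`-th moment about `1` of `scaledCMP ν u`, as a function of `u`. -/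
noncomputable def cmpMoment (ν : ℝ) (k : ℕ) (u : ℝ) : ℝ := ∫ y, (y - 1) ^ k ∂scaledCMP ν u

variable {ν u : ℝ}

lemma cmpMoment_zero (hν : 0 < ν) (hu : 0 < u) : cmpMoment ν 0 u = 1 := by
  have := isProbabilityMeasure_scaledCMP hν hu
  simp [cmpMoment]

lemma cmpMoment_isBigO (hν : 0 < ν) {k n : ℕ} (h : 2 * n ≤ k) :
    cmpMoment ν k =O[𝓝[>] 0] fun u => u ^ n :=
  (IsBigO.of_norm_le fun u => (norm_integral_le_integral_norm _).trans_eq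
    (by simp only [norm_pow, Real.norm_eq_abs])).trans (integral_abs_pow_isBigO hν h)

lemma integral_add_sub_one_pow (hν : 0 < ν) (hu : 0 < u) (c : ℝ) (k : ℕ) :
    ∫ y, (y + c - 1) ^ k ∂scaledCMP ν u =
      ∑ j ∈ Finset.range (k + 1), k.choose j * (c ^ (k - j) * cmpMoment ν j u) := by
  simp only [cmpMoment, ← integral_const_mul]
  rw [← integral_finsetSum _ fun j _ => HasPolynomialGrowth.integrable (by fun_prop) hν hu]
  refine integral_congr_ae (.of_forall fun y => ?_)
  simp only [add_sub_right_comm y c 1, add_pow]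
  exact Finset.sum_congr rfl fun j _ => by ring

lemma sum_cmpMoment_sub_sum_eq_integral (hν : 0 < ν) (hu : 0 < u) (k L : ℕ) :
    ∑ j ∈ Finset.range (k + 1), k.choose j * (u ^ (k - j) * cmpMoment ν j u) -
      ∑ i ∈ Finset.range L, Ring.choose ν i * cmpMoment ν (k + i) u =
      ∫ y, (y ^ ν - ∑ i ∈ Finset.range L, Ring.choose ν i * (y - 1) ^ i) * (y - 1) ^ k
        ∂scaledCMP ν u := by
  have hrpow := HasPolynomialGrowth.rpow hν.le
  have hint {f : ℝ → ℝ} (hf : HasPolynomialGrowth f) := hf.integrable hν hu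
  rw [← integral_add_sub_one_pow hν hu, ← integral_rpow_mul_scaledCMP hν.ne' hu
    fun y => (y - 1) ^ k]
  simp only [cmpMoment, ← integral_const_mul]
  rw [← integral_finsetSum _ fun i _ => hint (by fun_prop),
    ← integral_sub (hint (by fun_prop)) (hint (by fun_prop))]
  simp only [sub_mul, Finset.sum_mul, pow_add]
  refine integral_congr_ae (.of_forall fun y => congrArg _ (Finset.sum_congr rfl fun i _ => ?_))
  ring

/-- Stein's identity applied to `(y - 1) ^ k`, with `y ^ ν` replaced by its Taylor polynomial
at `1`. -/
lemma stein_cmpMoment_isBigO (hν : 0 < ν) {n k L : ℕ} (h : 2 * n ≤ k + L) :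
    (fun u => ∑ j ∈ Finset.range (k + 1), k.choose j * (u ^ (k - j) * cmpMoment ν j u) -
      ∑ i ∈ Finset.range L, Ring.choose ν i * cmpMoment ν (k + i) u) =O[𝓝[>] 0]
      fun u => u ^ n := by
  obtain ⟨C, -, p, hbound⟩ := exists_abs_rpow_sub_binomial_le hν.le L
  have hrpow := HasPolynomialGrowth.rpow hν.le
  have hO := (integral_abs_pow_isBigO hν h).add
    (integral_abs_pow_isBigO hν (show 2 * n ≤ k + (L + p) by lia))
  refine (IsBigO.of_bound C ?_).trans hO
  filter_upwards [self_mem_nhdsWithin] with u (hu : 0 < u)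
  have hnonneg (m : ℕ) : 0 ≤ ∫ y, |y - 1| ^ m ∂scaledCMP ν u :=
    integral_nonneg fun y => by positivity
  rw [sum_cmpMoment_sub_sum_eq_integral hν hu,
    Real.norm_of_nonneg (add_nonneg (hnonneg _) (hnonneg _)),
    ← integral_add (HasPolynomialGrowth.integrable (by fun_prop) hν hu)
      (HasPolynomialGrowth.integrable (by fun_prop) hν hu), ← integral_const_mul]
  refine (norm_integral_le_integral_norm _).trans
    (integral_scaledCMP_mono hν hu ?_ (by fun_prop) fun y hy => ?_)
  · simp only [Real.norm_eq_abs]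
    fun_prop
  rw [norm_mul, norm_pow, Real.norm_eq_abs, Real.norm_eq_abs]
  calc _ ≤ C * (|y - 1| ^ L + |y - 1| ^ (L + p)) * |y - 1| ^ k :=
        mul_le_mul_of_nonneg_right (hbound y hy) (by positivity)
    _ = _ := by ring

/-- Stein's identity determines the moment of order `k + 1` modulo `u ^ N` from those of higher
order, and from those of lower order modulo smaller powers of `u`. -/
lemma cmpMoment_mem_polynomialUpTo (hν : 0 < ν) (N k : ℕ) :
    cmpMoment ν k ∈ polynomialUpTo N := by
  induction N using Nat.strong_induction_on generalizing k with
  | h N ihN =>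
  induction hd : 2 * N - k using Nat.strong_induction_on generalizing k with
  | h d ihk =>
  rcases le_or_gt (2 * N) k with hk | hk
  · exact polynomialUpTo.mem_of_isBigO (cmpMoment_isBigO hν hk)
  cases k with
  | zero =>
    refine ⟨1, (isBigO_zero _ _).congr' ?_ .rfl⟩
    filter_upwards [self_mem_nhdsWithin] with u hu
    rw [cmpMoment_zero hν hu, Polynomial.eval_one, sub_self]
  | succ k =>
    have hstein := polynomialUpTo.mem_of_isBigO
      (stein_cmpMoment_isBigO hν (show 2 * N ≤ k + (2 * N + 1 + 1) by lia))
    have hlower : ∑ j ∈ Finset.range k, (k.choose j : ℝ) • (fun u => u ^ (k - j) * cmpMoment ν j u)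
        ∈ polynomialUpTo N :=
      Submodule.sum_mem _ fun j hj => Submodule.smul_mem _ _ <|
        polynomialUpTo.pow_mul_mem (ihN _ (by have := Finset.mem_range.1 hj; lia) j)
    have hhigher : ∑ i ∈ Finset.range (2 * N), Ring.choose ν (i + 2) • cmpMoment ν (k + (i + 2))
        ∈ polynomialUpTo N :=
      Submodule.sum_mem _ fun i _ => Submodule.smul_mem _ _ (ihk _ (by lia) _ rfl)
    refine (Submodule.smul_mem_iff _ hν.ne').1 ?_
    convert! Submodule.sub_mem _ (Submodule.sub_mem _ hlower hhigher) hstein using 1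
    ext u
    simp only [Finset.sum_range_succ', Finset.sum_range_succ _ k]
    simp

lemma exists_hasAsymptoticSeries_cmpMoment (hν : 0 < ν) :
    ∃ p : ℕ → PowerSeries ℝ, ∀ k, HasAsymptoticSeries (cmpMoment ν k) (p k) := by
  choose p hp using fun k => HasAsymptoticSeries.exists_of_forall_mem_polynomialUpTo fun N =>
    cmpMoment_mem_polynomialUpTo hν N k
  exact ⟨p, hp⟩

lemma integral_id_scaledCMP (hν : 0 < ν) (hu : 0 < u) :
    ∫ y, y ∂scaledCMP ν u = cmpMoment ν 1 u + 1 := by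
  have := isProbabilityMeasure_scaledCMP hν hu
  simp [cmpMoment, integral_sub (HasPolynomialGrowth.id.integrable hν hu) (integrable_const 1)]

lemma hasDerivAt_cmpMoment (hν : 0 < ν) (hu : 0 < u) (k : ℕ) :
    HasDerivAt (cmpMoment ν k) (k * (cmpMoment ν k u + cmpMoment ν (k - 1) u) / u -
      ν / u ^ 2 * (cmpMoment ν (k + 1) u - cmpMoment ν 1 u * cmpMoment ν k u)) u := by
  have hint {f : ℝ → ℝ} (hf : HasPolynomialGrowth f) := hf.integrable hν hu
  have hderiv (y : ℝ) : HasDerivAt (fun y : ℝ => (y - 1) ^ k) (k * (y - 1) ^ (k - 1)) y := by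
    simpa using ((hasDerivAt_id y).sub_const 1).fun_pow k
  have hpow (y : ℝ) : y * (k * (y - 1) ^ (k - 1)) = k * ((y - 1) ^ k + (y - 1) ^ (k - 1)) := by
    cases k with
    | zero => simp
    | succ k => rw [Nat.add_sub_cancel]; ring
  refine (hasDerivAt_integral_scaledCMP hν hu hderiv (by fun_prop) (by fun_prop)).congr_deriv ?_
  have hmul : ∫ y, y * (y - 1) ^ k ∂scaledCMP ν u = cmpMoment ν (k + 1) u + cmpMoment ν k u := by
    rw [cmpMoment, cmpMoment, ← integral_add (hint (by fun_prop)) (hint (by fun_prop))]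
    exact integral_congr_ae (.of_forall fun y => by ring)
  have hk : ∫ y, ((y - 1) ^ k + (y - 1) ^ (k - 1)) ∂scaledCMP ν u =
    cmpMoment ν k u + cmpMoment ν (k - 1) u :=
    integral_add (hint (by fun_prop)) (hint (by fun_prop))
  simp only [hpow, integral_const_mul, hmul, integral_id_scaledCMP hν hu, hk]
  rw [cmpMoment]
  ring

end MomentExpansions

section MomentCoefficients

open PowerSeries

lemma coeff_X_mul_derivative (q : PowerSeries ℝ) (n : ℕ) :
    coeff n (X * d⁄dX ℝ q) = n * coeff n q := by
  cases n with
  | zero => simp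
  | succ n => rw [coeff_succ_X_mul, coeff_derivative, Nat.cast_succ, mul_comm]

lemma mk_one_sub_mul_coeff (q : PowerSeries ℝ) :
    PowerSeries.mk (fun n => (1 - (n : ℝ)) * coeff n q) = q - X * d⁄dX ℝ q := by
  ext n
  rw [coeff_mk, map_sub, coeff_X_mul_derivative, sub_mul, one_mul]

lemma coeff_succ_mul_eq_zero {q r : PowerSeries ℝ} {n : ℕ} (hq : coeff 0 q = 0)
    (hr : ∀ i ≤ n, coeff i r = 0) : coeff (n + 1) (q * r) = 0 := by
  rw [coeff_mul]
  refine Finset.sum_eq_zero fun ij hij => ?_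
  have hadd := Finset.HasAntidiagonal.mem_antidiagonal.1 hij
  rcases Nat.eq_zero_or_pos ij.1 with h0 | hpos
  · rw [h0, hq, zero_mul]
  · rw [hr ij.2 (by lia), mul_zero]

lemma coeff_two_mul_of_coeff_zero {q r : PowerSeries ℝ} (hq : coeff 0 q = 0) (hr : coeff 0 r = 0) :
    coeff 2 (q * r) = coeff 1 q * coeff 1 r := by
  simp [coeff_mul, Finset.Nat.antidiagonal_succ, hq, hr]

lemma coeff_three_mul_of_coeff_zero {q r : PowerSeries ℝ} (hq : coeff 0 q = 0)
    (hr : coeff 0 r = 0) :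
    coeff 3 (q * r) = coeff 1 q * coeff 2 r + coeff 2 q * coeff 1 r := by
  simp [coeff_mul, Finset.Nat.antidiagonal_succ, hq, hr]

variable {ν : ℝ} {p : ℕ → PowerSeries ℝ}

lemma cmpMomentSeries_zero (hν : 0 < ν) (hp : ∀ k, HasAsymptoticSeries (cmpMoment ν k) (p k)) :
    p 0 = 1 := by
  refine (hp 0).unique ?_
  rw [← map_one C]
  refine (HasAsymptoticSeries.const 1).congr' ?_
  filter_upwards [self_mem_nhdsWithin] with u hu using (cmpMoment_zero hν hu).symm

lemma cmpMomentSeries_succ (hν : 0 < ν) (hp : ∀ k, HasAsymptoticSeries (cmpMoment ν k) (p k))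
    (k : ℕ) :
    C ν * (p (k + 1) - p 1 * p k) = X * (C (k : ℝ) * (p k + p (k - 1)) - X * d⁄dX ℝ (p k)) := by
  have hq : HasAsymptoticSeries
      (fun u => u * (k * (cmpMoment ν k u + cmpMoment ν (k - 1) u)) -
        ν * (cmpMoment ν (k + 1) u - cmpMoment ν 1 u * cmpMoment ν k u))
      (X * (C (k : ℝ) * (p k + p (k - 1))) - C ν * (p (k + 1) - p 1 * p k)) :=
    (HasAsymptoticSeries.id.mul ((HasAsymptoticSeries.const _).mul ((hp k).add (hp (k - 1))))).sub
      ((HasAsymptoticSeries.const ν).mul ((hp (k + 1)).sub ((hp 1).mul (hp k))))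
  have h := (hp k).eq_X_pow_mul_derivative (m := 2) (fun u hu => hasDerivAt_cmpMoment hν hu k)
    (hq.congr' ?_)
  · linear_combination -h
  · filter_upwards [self_mem_nhdsWithin] with u (hu : 0 < u)
    field_simp

lemma coeff_succ_cmpMomentSeries_succ (hν : 0 < ν)
    (hp : ∀ k, HasAsymptoticSeries (cmpMoment ν k) (p k)) (k n : ℕ) :
    coeff (n + 1) (p (k + 1)) = coeff (n + 1) (p 1 * p k) +
      ((k - n) * coeff n (p k) + k * coeff n (p (k - 1))) / ν := by
  have h := congrArg (coeff (n + 1)) (cmpMomentSeries_succ hν hp k)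
  rw [coeff_C_mul, coeff_succ_X_mul, map_sub, map_sub, coeff_X_mul_derivative, coeff_C_mul,
    map_add] at h
  field_simp
  linear_combination h

lemma coeff_zero_cmpMomentSeries_succ (hν : 0 < ν)
    (hp : ∀ k, HasAsymptoticSeries (cmpMoment ν k) (p k)) (k : ℕ) :
    coeff 0 (p (k + 1)) = 0 := by
  have hmul (k : ℕ) : coeff 0 (p (k + 1)) = coeff 0 (p 1) * coeff 0 (p k) := by
    have h := congrArg (coeff 0) (cmpMomentSeries_succ hν hp k)
    rw [coeff_C_mul, coeff_zero_X_mul, mul_eq_zero, or_iff_right hν.ne', map_sub, sub_eq_zero] at h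
    simp [h]
  have htwo : coeff 0 (p 2) = 0 :=
    (hp 2).coeff_eq_zero_of_isBigO (N := 1) (cmpMoment_isBigO hν (by lia)) one_pos
  have hone : coeff 0 (p 1) = 0 := mul_self_eq_zero.1 ((hmul 1).symm.trans htwo)
  rw [hmul, hone, zero_mul]

lemma coeff_cmpMomentSeries_eq_zero (hν : 0 < ν)
    (hp : ∀ k, HasAsymptoticSeries (cmpMoment ν k) (p k)) {k n : ℕ} (h : 2 * n < k) :
    coeff n (p k) = 0 := by
  induction n using Nat.strong_induction_on generalizing k with
  | h n ih =>
  obtain ⟨k, rfl⟩ := Nat.exists_eq_succ_of_ne_zero (by lia : k ≠ 0)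
  cases n with
  | zero => exact coeff_zero_cmpMomentSeries_succ hν hp k
  | succ n =>
    rw [coeff_succ_cmpMomentSeries_succ hν hp, ih n (by lia) (by lia), ih n (by lia) (by lia),
      coeff_succ_mul_eq_zero (coeff_zero_cmpMomentSeries_succ hν hp 0)
        fun i hi => ih i (by lia) (by lia)]
    ring

open Nat in
lemma coeff_cmpMomentSeries_two_mul (hν : 0 < ν)
    (hp : ∀ k, HasAsymptoticSeries (cmpMoment ν k) (p k)) (n : ℕ) :
    coeff n (p (2 * n)) = (2 * n - 1)‼ / ν ^ n := by
  induction n with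
  | zero => simp [cmpMomentSeries_zero hν hp]
  | succ n ih =>
    have hodd {i : ℕ} (hi : i ≤ n) :=
      coeff_cmpMomentSeries_eq_zero hν hp (by lia : 2 * i < 2 * n + 1)
    rw [show 2 * (n + 1) = 2 * n + 1 + 1 by ring, coeff_succ_cmpMomentSeries_succ hν hp,
      hodd le_rfl, Nat.add_sub_cancel, ih,
      coeff_succ_mul_eq_zero (coeff_zero_cmpMomentSeries_succ hν hp 0) fun i => hodd,
      Nat.add_sub_cancel, doubleFactorial_add_one]
    push_cast
    field_simp
    ring

lemma sum_choose_mul_coeff_cmpMomentSeries (hν : 0 < ν)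
    (hp : ∀ k, HasAsymptoticSeries (cmpMoment ν k) (p k)) (n : ℕ) :
    ∑ i ∈ Finset.range (2 * n), Ring.choose ν (i + 1) * coeff n (p (i + 1)) = 0 := by
  have hstein := stein_cmpMoment_isBigO hν (show 2 * (n + 1) ≤ 0 + (2 * n + 1 + 1) by lia)
  have hseries := HasAsymptoticSeries.sum (Finset.range (2 * n + 1)) fun i _ =>
    (HasAsymptoticSeries.const (Ring.choose ν (i + 1))).mul (hp (i + 1))
  have h := hseries.coeff_eq_zero_of_isBigO (hstein.neg_left.congr_left fun u => ?_) n.lt_succ_self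
  · rw [Finset.sum_range_succ, map_add, map_sum, coeff_C_mul,
      coeff_cmpMomentSeries_eq_zero hν hp (by lia : 2 * n < 2 * n + 1), mul_zero, add_zero] at h
    simpa only [coeff_C_mul] using h
  · simp [Finset.sum_range_succ' _ (2 * n + 1)]

lemma coeff_one_cmpMomentSeries_one (hν : 0 < ν)
    (hp : ∀ k, HasAsymptoticSeries (cmpMoment ν k) (p k)) :
    coeff 1 (p 1) = (1 - ν) / (2 * ν) := by
  have hp2 : coeff 1 (p 2) = 1 / ν := by simpa using coeff_cmpMomentSeries_two_mul hν hp 1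
  have h : ν * coeff 1 (p 1) + ν * (ν - 1) / 2 * coeff 1 (p 2) = 0 := by
    rw [← sum_choose_mul_coeff_cmpMomentSeries hν hp 1]
    simp only [Finset.sum_range_succ, Finset.sum_range_zero, ringChoose_succ,
      Ring.choose_zero_right]
    push_cast
    ring
  rw [hp2] at h
  refine mul_left_cancel₀ hν.ne' ?_
  linear_combination (norm := (field_simp; ring)) h

lemma coeff_two_cmpMomentSeries_two (hν : 0 < ν)
    (hp : ∀ k, HasAsymptoticSeries (cmpMoment ν k) (p k)) :
    coeff 2 (p 2) = coeff 1 (p 1) ^ 2 := by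
  have hzero := coeff_zero_cmpMomentSeries_succ hν hp 0
  rw [coeff_succ_cmpMomentSeries_succ hν hp, coeff_two_mul_of_coeff_zero hzero hzero,
    cmpMomentSeries_zero hν hp]
  simp [sq]

lemma coeff_two_cmpMomentSeries_three (hν : 0 < ν)
    (hp : ∀ k, HasAsymptoticSeries (cmpMoment ν k) (p k)) :
    coeff 2 (p 3) = 3 * coeff 1 (p 1) / ν + 1 / ν ^ 2 := by
  have hzero := coeff_zero_cmpMomentSeries_succ hν hp
  have hp2 : coeff 1 (p 2) = 1 / ν := by simpa using coeff_cmpMomentSeries_two_mul hν hp 1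
  rw [coeff_succ_cmpMomentSeries_succ hν hp, coeff_two_mul_of_coeff_zero (hzero 0) (hzero 1), hp2]
  push_cast
  ring

lemma coeff_two_cmpMomentSeries_one (hν : 0 < ν)
    (hp : ∀ k, HasAsymptoticSeries (cmpMoment ν k) (p k)) :
    coeff 2 (p 1) = (1 - ν ^ 2) / (24 * ν ^ 2) := by
  have hp4 : coeff 2 (p 4) = 3 / ν ^ 2 := by simpa using coeff_cmpMomentSeries_two_mul hν hp 2
  have h : ν * coeff 2 (p 1) + ν * (ν - 1) / 2 * coeff 2 (p 2) +
      ν * (ν - 1) * (ν - 2) / 6 * coeff 2 (p 3) +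
      ν * (ν - 1) * (ν - 2) * (ν - 3) / 24 * coeff 2 (p 4) = 0 := by
    rw [← sum_choose_mul_coeff_cmpMomentSeries hν hp 2]
    simp only [Finset.sum_range_succ, Finset.sum_range_zero, ringChoose_succ,
      Ring.choose_zero_right]
    push_cast
    ring
  rw [coeff_two_cmpMomentSeries_two hν hp, coeff_two_cmpMomentSeries_three hν hp, hp4,
    coeff_one_cmpMomentSeries_one hν hp] at h
  refine mul_left_cancel₀ hν.ne' ?_
  linear_combination (norm := (field_simp; ring)) h

lemma coeff_three_cmpMomentSeries_add_two (hν : 0 < ν)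
    (hp : ∀ k, HasAsymptoticSeries (cmpMoment ν k) (p k)) (k : ℕ) :
    coeff 3 (p (k + 2)) =
      coeff 1 (p 1) * coeff 2 (p (k + 1)) + coeff 2 (p 1) * coeff 1 (p (k + 1)) +
        ((k - 1) * coeff 2 (p (k + 1)) + (k + 1) * coeff 2 (p k)) / ν := by
  have hzero := coeff_zero_cmpMomentSeries_succ hν hp
  rw [coeff_succ_cmpMomentSeries_succ hν hp, coeff_three_mul_of_coeff_zero (hzero 0) (hzero k),
    Nat.add_sub_cancel]
  push_cast
  ring

lemma coeff_three_cmpMomentSeries_one (hν : 0 < ν)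
    (hp : ∀ k, HasAsymptoticSeries (cmpMoment ν k) (p k)) :
    coeff 3 (p 1) = (1 - ν ^ 2) / (24 * ν ^ 3) := by
  have hp2 : coeff 1 (p 2) = 1 / ν := by simpa using coeff_cmpMomentSeries_two_mul hν hp 1
  have hp4 : coeff 2 (p 4) = 3 / ν ^ 2 := by simpa using coeff_cmpMomentSeries_two_mul hν hp 2
  have hp6 : coeff 3 (p 6) = 15 / ν ^ 3 := by simpa using coeff_cmpMomentSeries_two_mul hν hp 3
  have hp0 : coeff 2 (p 0) = 0 := by simp [cmpMomentSeries_zero hν hp, coeff_one]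
  have hlow {k : ℕ} (h : 2 * 1 < k) := coeff_cmpMomentSeries_eq_zero hν hp h
  have hsucc := coeff_three_cmpMomentSeries_add_two hν hp
  have h : ν * coeff 3 (p 1) + ν * (ν - 1) / 2 * coeff 3 (p 2) +
      ν * (ν - 1) * (ν - 2) / 6 * coeff 3 (p 3) +
      ν * (ν - 1) * (ν - 2) * (ν - 3) / 24 * coeff 3 (p 4) +
      ν * (ν - 1) * (ν - 2) * (ν - 3) * (ν - 4) / 120 * coeff 3 (p 5) +
      ν * (ν - 1) * (ν - 2) * (ν - 3) * (ν - 4) * (ν - 5) / 720 * coeff 3 (p 6) = 0 := by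
    rw [← sum_choose_mul_coeff_cmpMomentSeries hν hp 3]
    simp only [Finset.sum_range_succ, Finset.sum_range_zero, ringChoose_succ,
      Ring.choose_zero_right]
    push_cast
    ring
  rw [hp6, hsucc 0, hsucc 1, hsucc 2, hsucc 3] at h
  simp only [hp2, hp4, hlow (show 2 * 1 < 3 by lia), hlow (show 2 * 1 < 4 by lia), hp0,
    coeff_two_cmpMomentSeries_two hν hp,
    coeff_two_cmpMomentSeries_three hν hp, coeff_one_cmpMomentSeries_one hν hp,
    coeff_two_cmpMomentSeries_one hν hp] at h
  refine mul_left_cancel₀ hν.ne' ?_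
  linear_combination (norm := (field_simp; ring)) h

/-- Since the mean is the logarithmic derivative `λ d/dλ` of the normalizing constant, the cumulants
arise by iterating `λ d/dλ = -(u / ν) d/du`, which acts on the scaled means as `1 - u d/du`. -/
lemma C_mul_cmpVarianceSeries (hν : 0 < ν) (hp : ∀ k, HasAsymptoticSeries (cmpMoment ν k) (p k)) :
    C ν * (p 2 - p 1 * p 1) = X * PowerSeries.mk fun n => (1 - (n : ℝ)) * coeff n (1 + p 1) := by
  have h := cmpMomentSeries_succ hν hp 1
  rw [cmpMomentSeries_zero hν hp] at h
  rw [mk_one_sub_mul_coeff, h]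
  simp [add_comm]

lemma C_sq_mul_cmpThirdSeries (hν : 0 < ν)
    (hp : ∀ k, HasAsymptoticSeries (cmpMoment ν k) (p k)) :
    C (ν ^ 2) * (p 3 - C 3 * (p 1 * p 2) + C 2 * (p 1 * (p 1 * p 1))) =
      X ^ 2 * PowerSeries.mk fun n => (1 - (n : ℝ)) ^ 2 * coeff n (1 + p 1) := by
  have hC (a : ℕ) [a.AtLeastTwo] : (C (OfNat.ofNat a : ℝ) : PowerSeries ℝ) = OfNat.ofNat a :=
    map_ofNat C a
  have hone : C ν * (p 2 - p 1 * p 1) = X * (1 + p 1 - X * d⁄dX ℝ (p 1)) := by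
    simpa [cmpMomentSeries_zero hν hp, add_comm] using cmpMomentSeries_succ hν hp 1
  have htwo : C ν * (p 3 - p 1 * p 2) = X * (2 * (p 2 + p 1) - X * d⁄dX ℝ (p 2)) := by
    simpa [hC] using cmpMomentSeries_succ hν hp 2
  have hvar := C_mul_cmpVarianceSeries hν hp
  set A := PowerSeries.mk fun n => (1 - (n : ℝ)) * coeff n (1 + p 1)
  have hA : (PowerSeries.mk fun n => (1 - (n : ℝ)) ^ 2 * coeff n (1 + p 1)) = A - X * d⁄dX ℝ A := by
    rw [← mk_one_sub_mul_coeff]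
    simp [A, sq, mul_assoc]
  have hderiv : C ν * (d⁄dX ℝ (p 2) - 2 * p 1 * d⁄dX ℝ (p 1)) = A + X * d⁄dX ℝ A := by
    have h := congrArg (d⁄dX ℝ) hvar
    simp only [Derivation.leibniz, derivative_C, derivative_X, smul_eq_mul, map_sub] at h
    linear_combination h
  rw [hA, hC, hC, map_pow]
  linear_combination C ν * htwo - 2 * C ν * p 1 * hone + 2 * X * hvar - X * X * hderiv

end MomentCoefficients

section CentralMoments

open MeasureTheory ProbabilityTheory Filter Topology PowerSeries

variable {ν u : ℝ}

lemma tsum_div_cmpZ_eq_integral (ν : ℝ) (hu : 0 < u) (f : ℝ → ℝ) :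
    (∑' j : ℕ, f j * (u ^ (-ν)) ^ j / (j.factorial : ℝ) ^ ν) / cmpZ (u ^ (-ν)) ν =
      ∫ y, f (y / u) ∂scaledCMP ν u := by
  simp only [integral_scaledCMP ν hu, mul_div_cancel_left₀ _ hu.ne', cmpWeight, mul_div_assoc]

lemma cmpMean_rpow_neg (ν : ℝ) (hu : 0 < u) :
    cmpMean (u ^ (-ν)) ν = (∫ y, y ∂scaledCMP ν u) / u :=
  (tsum_div_cmpZ_eq_integral ν hu id).trans (integral_div u id)

lemma cmpCentralMoment_rpow_neg (ν : ℝ) (hu : 0 < u) (k : ℕ) :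
    cmpCentralMoment k (u ^ (-ν)) ν = centralMoment id k (scaledCMP ν u) / u ^ k := by
  rw [cmpCentralMoment, tsum_div_cmpZ_eq_integral ν hu fun x => (x - cmpMean (u ^ (-ν)) ν) ^ k,
    cmpMean_rpow_neg ν hu]
  simp only [← sub_div, div_pow, integral_div]
  rfl

lemma centralMoment_scaledCMP (hν : 0 < ν) (hu : 0 < u) (k : ℕ) :
    centralMoment id k (scaledCMP ν u) =
      ∑ j ∈ Finset.range (k + 1),
        k.choose j * ((-cmpMoment ν 1 u) ^ (k - j) * cmpMoment ν j u) := by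
  simp only [centralMoment, Pi.pow_apply, Pi.sub_apply, id_eq, integral_id_scaledCMP hν hu]
  rw [← integral_add_sub_one_pow hν hu]
  congr! 3
  ring

lemma centralMoment_two_scaledCMP (hν : 0 < ν) (hu : 0 < u) :
    centralMoment id 2 (scaledCMP ν u) = cmpMoment ν 2 u - cmpMoment ν 1 u * cmpMoment ν 1 u := by
  rw [centralMoment_scaledCMP hν hu]
  simp only [Finset.sum_range_succ, Finset.sum_range_zero, cmpMoment_zero hν hu, Nat.choose]
  push_cast
  ring

lemma centralMoment_three_scaledCMP (hν : 0 < ν) (hu : 0 < u) :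
    centralMoment id 3 (scaledCMP ν u) = cmpMoment ν 3 u -
      3 * (cmpMoment ν 1 u * cmpMoment ν 2 u) +
        2 * (cmpMoment ν 1 u * (cmpMoment ν 1 u * cmpMoment ν 1 u)) := by
  rw [centralMoment_scaledCMP hν hu]
  simp only [Finset.sum_range_succ, Finset.sum_range_zero, cmpMoment_zero hν hu, Nat.choose]
  push_cast
  ring

lemma sqrt_mul_cmpSkewness_rpow_neg (hν : 0 < ν) (hu : 0 < u) :
    √ν * (u ^ (-ν)) ^ (1 / (2 * ν)) * cmpSkewness (u ^ (-ν)) ν =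
      ν ^ 2 * centralMoment id 3 (scaledCMP ν u) / u ^ 2 *
        (ν * centralMoment id 2 (scaledCMP ν u) / u) ^ (-(3 : ℝ) / 2) := by
  have hc : 0 ≤ centralMoment id 2 (scaledCMP ν u) := integral_nonneg fun y => sq_nonneg _
  have hpow : (u ^ (-ν)) ^ (1 / (2 * ν)) = u ^ (-(1 : ℝ) / 2) := by
    rw [← Real.rpow_mul hu.le]
    congr 1
    field_simp
  have hcube {x : ℝ} (hx : 0 ≤ x) : x ^ ((3 : ℝ) / 2) = √x ^ 3 := by
    rw [Real.sqrt_eq_rpow, ← Real.rpow_mul_natCast hx]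
    norm_num
  rw [hpow, cmpSkewness, cmpCentralMoment_rpow_neg ν hu, cmpCentralMoment_rpow_neg ν hu, neg_div,
    neg_div, Real.rpow_neg hu.le, Real.rpow_neg (by positivity), ← Real.sqrt_eq_rpow,
    hcube (by positivity), hcube (by positivity), Real.sqrt_div hc, Real.sqrt_div (by positivity),
    Real.sqrt_mul hν.le, Real.sqrt_sq hu.le]
  have hν4 : ν ^ 2 = √ν ^ 4 := by rw [pow_mul (√ν) 2 2, Real.sq_sqrt hν.le]
  have hu4 : u ^ 2 = √u ^ 4 := by rw [pow_mul (√u) 2 2, Real.sq_sqrt hu.le]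
  have := Real.sqrt_pos.2 hν
  have := Real.sqrt_pos.2 hu
  rw [hν4, hu4, div_pow _ u, div_div_div_cancel_right₀ (by positivity)]
  field_simp

variable {p : ℕ → PowerSeries ℝ}

lemma hasAsymptoticSeries_mul_centralMoment_two_div (hν : 0 < ν)
    (hp : ∀ k, HasAsymptoticSeries (cmpMoment ν k) (p k)) :
    HasAsymptoticSeries (fun u => ν * centralMoment id 2 (scaledCMP ν u) / u)
      (PowerSeries.mk fun n => (1 - (n : ℝ)) * coeff n (1 + p 1)) := by
  have h := (HasAsymptoticSeries.const ν).mul ((hp 2).sub ((hp 1).mul (hp 1)))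
  rw [C_mul_cmpVarianceSeries hν hp, ← pow_one X] at h
  refine h.of_X_pow_mul.congr' ?_
  filter_upwards [self_mem_nhdsWithin] with u hu
  rw [centralMoment_two_scaledCMP hν hu, pow_one]

lemma hasAsymptoticSeries_mul_centralMoment_three_div (hν : 0 < ν)
    (hp : ∀ k, HasAsymptoticSeries (cmpMoment ν k) (p k)) :
    HasAsymptoticSeries (fun u => ν ^ 2 * centralMoment id 3 (scaledCMP ν u) / u ^ 2)
      (PowerSeries.mk fun n => (1 - (n : ℝ)) ^ 2 * coeff n (1 + p 1)) := by
  have h := (HasAsymptoticSeries.const (ν ^ 2)).mul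
    (((hp 3).sub ((HasAsymptoticSeries.const 3).mul ((hp 1).mul (hp 2)))).add
      ((HasAsymptoticSeries.const 2).mul ((hp 1).mul ((hp 1).mul (hp 1)))))
  rw [C_sq_mul_cmpThirdSeries hν hp] at h
  refine h.of_X_pow_mul.congr' ?_
  filter_upwards [self_mem_nhdsWithin] with u hu
  rw [centralMoment_three_scaledCMP hν hu]

lemma mul_centralMoment_two_div_isBigO (hν : 0 < ν) :
    (fun u => ν * centralMoment id 2 (scaledCMP ν u) / u -
      (1 + (ν ^ 2 - 1) / (24 * ν ^ 2) * u ^ 2 + (ν ^ 2 - 1) / (12 * ν ^ 3) * u ^ 3))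
      =O[𝓝[>] 0] fun u => u ^ 4 := by
  obtain ⟨p, hp⟩ := exists_hasAsymptoticSeries_cmpMoment hν
  refine ((hasAsymptoticSeries_mul_centralMoment_two_div hν hp).isBigO_sub_sum 4).congr_left
    fun u => ?_
  simp only [Finset.sum_range_succ, Finset.sum_range_zero, coeff_mk, map_add, coeff_one,
    one_ne_zero, OfNat.ofNat_ne_zero, ↓reduceIte, coeff_zero_cmpMomentSeries_succ hν hp 0,
    coeff_two_cmpMomentSeries_one hν hp, coeff_three_cmpMomentSeries_one hν hp]
  push_cast
  ring

lemma mul_centralMoment_three_div_isBigO (hν : 0 < ν) :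
    (fun u => ν ^ 2 * centralMoment id 3 (scaledCMP ν u) / u ^ 2 -
      (1 + (1 - ν ^ 2) / (24 * ν ^ 2) * u ^ 2 + (1 - ν ^ 2) / (6 * ν ^ 3) * u ^ 3))
      =O[𝓝[>] 0] fun u => u ^ 4 := by
  obtain ⟨p, hp⟩ := exists_hasAsymptoticSeries_cmpMoment hν
  refine ((hasAsymptoticSeries_mul_centralMoment_three_div hν hp).isBigO_sub_sum 4).congr_left
    fun u => ?_
  simp only [Finset.sum_range_succ, Finset.sum_range_zero, coeff_mk, map_add, coeff_one,
    one_ne_zero, OfNat.ofNat_ne_zero, ↓reduceIte, coeff_zero_cmpMomentSeries_succ hν hp 0,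
    coeff_two_cmpMomentSeries_one hν hp, coeff_three_cmpMomentSeries_one hν hp]
  push_cast
  ring

lemma cmpSkewness_rpow_neg_isBigO (hν : 0 < ν) :
    (fun u => √ν * (u ^ (-ν)) ^ (1 / (2 * ν)) * cmpSkewness (u ^ (-ν)) ν - 1 +
      5 * (ν ^ 2 - 1) / (48 * ν ^ 2) * u ^ 2 + 7 * (ν ^ 2 - 1) / (24 * ν ^ 3) * u ^ 3)
      =O[𝓝[>] 0] fun u => u ^ 4 := by
  have htwo := mul_centralMoment_two_div_isBigO hν
  have hthree := mul_centralMoment_three_div_isBigO hν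
  have hpow {m n : ℕ} (h : m ≤ n) : (fun u : ℝ => u ^ n) =O[𝓝[>] 0] fun u => u ^ m :=
    pow_isBigO_pow_of_le nhdsWithin_le_nhds h
  have hsub_one {f : ℝ → ℝ} {b c : ℝ}
      (h : (fun u => f u - (1 + b * u ^ 2 + c * u ^ 3)) =O[𝓝[>] 0] fun u => u ^ 4) :
      (fun u => f u - 1) =O[𝓝[>] 0] fun u => u ^ 2 := by
    refine ((h.trans (hpow (by lia))).add (((hpow le_rfl).const_mul_left b).add
      ((hpow (show 2 ≤ 3 by lia)).const_mul_left c))).congr_left fun u => ?_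
    ring
  have h := mul_rpow_sub_isBigO (hsub_one hthree) (hsub_one htwo) ?_ (-(3 : ℝ) / 2)
  · refine ((h.congr_right fun u => (pow_mul u 2 2).symm).add
      (hthree.add (htwo.const_mul_left (-3 / 2)))).congr' ?_ .rfl
    filter_upwards [self_mem_nhdsWithin] with u hu
    rw [sqrt_mul_cmpSkewness_rpow_neg hν hu]
    ring
  · exact ((continuous_pow 2).tendsto' 0 0 (by simp)).mono_left nhdsWithin_le_nhds

lemma cmpSkewness_isBigO_atTop (hν : 0 < ν) :
    (fun lam => √ν * lam ^ (1 / (2 * ν)) * cmpSkewness lam ν - 1 +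
      5 * (ν ^ 2 - 1) / (48 * ν ^ 2) * lam ^ (-(2 / ν)) +
      7 * (ν ^ 2 - 1) / (24 * ν ^ 3) * lam ^ (-(3 / ν)))
      =O[atTop] fun lam => lam ^ (-(4 / ν)) := by
  have hpos : ∀ᶠ lam : ℝ in atTop, 0 < lam := eventually_gt_atTop 0
  have hlim : Tendsto (fun lam : ℝ => lam ^ (-(1 / ν))) atTop (𝓝[>] 0) :=
    tendsto_nhdsWithin_iff.2 ⟨tendsto_rpow_neg_atTop (by positivity),
      hpos.mono fun lam h => Real.rpow_pos_of_pos h _⟩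
  have hpow {lam : ℝ} (h : 0 < lam) (n : ℕ) : (lam ^ (-(1 / ν))) ^ n = lam ^ (-(n / ν)) := by
    rw [← Real.rpow_mul_natCast h.le]
    ring_nf
  have hinv {lam : ℝ} (h : 0 < lam) : (lam ^ (-(1 / ν))) ^ (-ν) = lam := by
    rw [← Real.rpow_mul h.le, neg_mul_neg, one_div_mul_cancel hν.ne', Real.rpow_one]
  refine ((cmpSkewness_rpow_neg_isBigO hν).comp_tendsto hlim).congr' ?_ ?_ <;>
    filter_upwards [hpos] with lam h
  · simp only [Function.comp_apply, hinv h, hpow h]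
    norm_cast
  · simp only [Function.comp_apply, hpow h]
    norm_cast

end CentralMoments

/-- Asymptotics of the skewness of the `CMP(λ,ν)` distribution:
`γ₁ = (λ^{−1/(2ν)}/√ν)(1 − (5(ν²−1)/(48ν²)) λ^{−2/ν} − (7(ν²−1)/(24ν³)) λ^{−3/ν}
  + O(λ^{−4/ν}))` as `λ → ∞`. -/
theorem cmpSkewness_asymptotic (ν : ℝ) (hν : 0 < ν) :
    ∃ C > (0 : ℝ), ∃ Λ > (0 : ℝ), ∀ lam : ℝ, lam ≥ Λ →
      |Real.sqrt ν * lam ^ (1 / (2 * ν)) * cmpSkewness lam ν - 1 +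
          (5 * (ν ^ 2 - 1) / (48 * ν ^ 2)) * lam ^ (-(2 / ν)) +
          (7 * (ν ^ 2 - 1) / (24 * ν ^ 3)) * lam ^ (-(3 / ν))|
        ≤ C * lam ^ (-(4 / ν)) := by
  obtain ⟨C, hC, hbound⟩ := (cmpSkewness_isBigO_atTop hν).exists_pos
  obtain ⟨Λ, hΛ⟩ := Filter.eventually_atTop.1 hbound.bound
  refine ⟨C, hC, max Λ 1, lt_max_of_lt_right one_pos, fun lam hlam => ?_⟩
  have hlam0 : 0 < lam := one_pos.trans_le (le_of_max_le_right hlam)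
  refine (hΛ lam (le_of_max_le_left hlam)).trans_eq ?_
  rw [Real.norm_of_nonneg (by positivity)]
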